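/- Let d ≥ 3 be an integer. There exist constants C > 0 and C' > 0 such that for every integer l ≥ 0 and every μ ≥ 2, | 𝒩_l(μ) − 𝒲_l(μ) | ≤ 𝒲_l(μ + C μ^{−3/7}) − 𝒲_l(μ − C μ^{−3/7}) + C' μ^{4/7}, where 𝒩_l(μ) = Σ_{n=l}^∞ #{x ∈ (0, μ] : J_{n+d/2−1}(x) = 0}. -/

import Mathlib

open Real MeasureTheory Set

/-- The Bessel function of the first kind of order `ν ≥ 0`, for `x > 0`, via the
integral representation. -/
noncomputable def besselJ (ν x : ℝ) : ℝ :=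
  (1 / π) * (∫ θ in (0:ℝ)..π, Real.cos (x * Real.sin θ - ν * θ)) -
    (Real.sin (ν * π) / π) * ∫ t in Set.Ioi (0:ℝ), Real.exp (-x * Real.sinh t - ν * t)

/-- The function `g(t) = (√(1-t²) - t arccos t)/π`. -/
noncomputable def gfun (t : ℝ) : ℝ := (Real.sqrt (1 - t ^ 2) - t * Real.arccos t) / π

/-- The lattice count `𝒲_l(μ) = #{(n,k) ∈ ℤ×ℤ : n ≥ l, k ≥ 1, n + d/2 - 1 ≤ μ,
k - 1/4 ≤ μ g((n + d/2 - 1)/μ)}`. -/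
noncomputable def latticeW (d l : ℕ) (μ : ℝ) : ℕ :=
  {p : ℤ × ℤ | (l : ℤ) ≤ p.1 ∧ 1 ≤ p.2 ∧ (p.1 : ℝ) + (d : ℝ) / 2 - 1 ≤ μ ∧
    (p.2 : ℝ) - 1 / 4 ≤ μ * gfun (((p.1 : ℝ) + (d : ℝ) / 2 - 1) / μ)}.ncard

/-- The number of zeros of `J_ν` in `(0, μ]`. -/
noncomputable def zcount (ν μ : ℝ) : ℕ := {x : ℝ | 0 < x ∧ x ≤ μ ∧ besselJ ν x = 0}.ncard

/-!
In the variable `log x` Bessel's equation reads `f'' + (x² - ν²) f = 0`. Beyond the turning point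
`x = ν` the zeros of `J_ν` are the points where its Prüfer angle is a multiple of `π`, and that
angle differs from the Liouville–Green phase `π x g(ν / x) + π / 4` by at most
`3 / 4 * x² / (x² - ν²) ^ (3 / 2)`; the constant `π / 4` comes from the asymptotics of `J_ν` at
infinity. Up to the point where this bound drops to `9 / 8`, a Sturm comparison excludes zeros.
Hence `J_ν` has `⌊θ(μ) / π⌋` zeros in `(0, μ]`, while the lattice column of `ν` has
`⌊μ g(ν / μ) + 1 / 4⌋` points.

For `ν ≤ μ - 2 μ ^ (5 / 7)` the phase error is at most the change of the phase when `μ` moves by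
`μ ^ (-3 / 7)`. For the remaining orders the two counts differ by at most `1`, and only if some
level `k π` lies within the phase error of the phase. Since the phase decreases in `ν`, each `k`
affects at most `O(μ ^ (3 / 7) / k + 1)` orders; only `k ≤ 4 μ ^ (4 / 7)` occur, and summing the
harmonic series gives `O(μ ^ (4 / 7))`.
-/

section Monotonicity

variable {D : Set ℝ} {f f' : ℝ → ℝ}

lemma monotoneOn_of_hasDerivAt_nonneg (hD : Convex ℝ D) (hf : ∀ x ∈ D, HasDerivAt f (f' x) x)
    (hf' : ∀ x ∈ D, 0 ≤ f' x) : MonotoneOn f D :=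
  monotoneOn_of_hasDerivWithinAt_nonneg hD
    (fun x hx ↦ (hf x hx).continuousAt.continuousWithinAt)
    (fun x hx ↦ (hf x (interior_subset hx)).hasDerivWithinAt)
    fun x hx ↦ hf' x (interior_subset hx)

lemma antitoneOn_of_hasDerivAt_nonpos (hD : Convex ℝ D) (hf : ∀ x ∈ D, HasDerivAt f (f' x) x)
    (hf' : ∀ x ∈ D, f' x ≤ 0) : AntitoneOn f D :=
  antitoneOn_of_hasDerivWithinAt_nonpos hD
    (fun x hx ↦ (hf x hx).continuousAt.continuousWithinAt)
    (fun x hx ↦ (hf x (interior_subset hx)).hasDerivWithinAt)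
    fun x hx ↦ hf' x (interior_subset hx)

lemma monotoneOn_Ici_of_hasDerivAt_nonneg {a : ℝ} (hc : ContinuousOn f (Ici a))
    (hf : ∀ x, a < x → HasDerivAt f (f' x) x) (hf' : ∀ x, a < x → 0 ≤ f' x) :
    MonotoneOn f (Ici a) := by
  refine monotoneOn_of_hasDerivWithinAt_nonneg (f' := f') (convex_Ici a) hc ?_ ?_ <;>
    rw [interior_Ici]
  exacts [fun x hx ↦ (hf x hx).hasDerivWithinAt, hf']

end Monotonicity

/-! ### The Liouville–Green phase -/

section Phase

open Filter Topology

/-- The local frequency `ω = √(x² - ν²)` of Bessel's equation in the variable `log x`, where the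
equation reads `f'' + (x² - ν²) f = 0`. It is `0` (junk) for `|x| < |ν|`. -/
noncomputable def localFreq (ν x : ℝ) : ℝ := √(x ^ 2 - ν ^ 2)

/-- The Liouville–Green phase `S(x) = ∫_ν^x ω(t) dt / t` in closed form; it equals
`π x g(ν / x)`. -/
noncomputable def wkbPhase (ν x : ℝ) : ℝ := localFreq ν x - ν * arccos (ν / x)

/-- The error scale `E(x) = x² / ω³` of the Liouville–Green approximation. -/
noncomputable def wkbError (ν x : ℝ) : ℝ := x ^ 2 / localFreq ν x ^ 3

/-- The closed form of `∫_x^∞ t³ / ω(t)⁵ dt`, the accumulated quadratic error of the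
Liouville–Green approximation. -/
noncomputable def wkbTail (ν x : ℝ) : ℝ := 1 / localFreq ν x + ν ^ 2 / (3 * localFreq ν x ^ 3)

variable {ν x y : ℝ}

lemma localFreq_nonneg (ν x : ℝ) : 0 ≤ localFreq ν x := sqrt_nonneg _

@[simp] lemma localFreq_self (ν : ℝ) : localFreq ν ν = 0 := by simp [localFreq]

lemma localFreq_pos (hν : 0 ≤ ν) (hx : ν < x) : 0 < localFreq ν x :=
  sqrt_pos.2 (by nlinarith)

lemma localFreq_sq (hν : 0 ≤ ν) (hx : ν ≤ x) : localFreq ν x ^ 2 = x ^ 2 - ν ^ 2 :=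
  sq_sqrt (by nlinarith)

lemma continuous_localFreq (ν : ℝ) : Continuous (localFreq ν) := by
  unfold localFreq
  fun_prop

lemma hasDerivAt_localFreq (hν : 0 ≤ ν) (hx : ν < x) :
    HasDerivAt (localFreq ν) (x / localFreq ν x) x := by
  have hsq : HasDerivAt (fun y : ℝ ↦ y ^ 2 - ν ^ 2) (2 * x) x := by
    simpa using (hasDerivAt_pow 2 x).sub_const (ν ^ 2)
  exact (hsq.sqrt (by nlinarith)).congr_deriv (mul_div_mul_left _ _ two_ne_zero)

lemma hasDerivAt_localFreq_order (hν : 0 ≤ ν) (hx : ν < x) :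
    HasDerivAt (fun η ↦ localFreq η x) (-ν / localFreq ν x) ν := by
  have hsq : HasDerivAt (fun η : ℝ ↦ x ^ 2 - η ^ 2) (2 * -ν) ν := by
    simpa using (hasDerivAt_pow 2 ν).const_sub (x ^ 2)
  exact (hsq.sqrt (by nlinarith)).congr_deriv (mul_div_mul_left _ _ two_ne_zero)

lemma hasDerivAt_localFreq_cube (hν : 0 ≤ ν) (hx : ν < x) :
    HasDerivAt (fun y ↦ localFreq ν y ^ 3) (3 * localFreq ν x * x) x := by
  have hω := localFreq_pos hν hx
  refine ((hasDerivAt_localFreq hν hx).pow 3).congr_deriv ?_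
  push_cast
  field_simp

lemma sqrt_one_sub_div_sq (hx : 0 < x) : √(1 - (ν / x) ^ 2) = localFreq ν x / x := by
  have hscale : 1 - (ν / x) ^ 2 = (x ^ 2 - ν ^ 2) / x ^ 2 := by field_simp
  rw [hscale, sqrt_div' _ (sq_nonneg x), sqrt_sq hx.le, localFreq]

lemma mul_gfun_div (hx : 0 < x) : x * gfun (ν / x) = wkbPhase ν x / π := by
  rw [gfun, sqrt_one_sub_div_sq hx, wkbPhase]
  field_simp

lemma localFreq_div_le_arccos (hx : 0 < x) : localFreq ν x / x ≤ arccos (ν / x) := by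
  rw [← sqrt_one_sub_div_sq hx, ← sin_arccos]
  exact sin_le (arccos_nonneg _)

lemma localFreq_div_mono (hν : 0 < ν) (hx : ν < x) (hxy : x ≤ y) :
    localFreq ν x / x ≤ localFreq ν y / y := by
  have hx0 := hν.trans hx
  have hy0 := hx0.trans_le hxy
  rw [← sqrt_one_sub_div_sq hx0, ← sqrt_one_sub_div_sq hy0]
  gcongr

lemma hasDerivAt_wkbPhase (hν : 0 < ν) (hx : ν < x) :
    HasDerivAt (wkbPhase ν) (localFreq ν x / x) x := by
  have hx0 : 0 < x := hν.trans hx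
  have hω := localFreq_pos hν.le hx
  have hdiv : HasDerivAt (fun y ↦ ν / y) (-ν / x ^ 2) x := by
    simpa using (hasDerivAt_const x ν).fun_div (hasDerivAt_id x) hx0.ne'
  have harccos := (hasDerivAt_arccos (x := ν / x) (by linarith [div_pos hν hx0])
    ((div_lt_one hx0).2 hx).ne).comp x hdiv
  refine ((hasDerivAt_localFreq hν.le hx).sub (harccos.const_mul ν)).congr_deriv ?_
  rw [sqrt_one_sub_div_sq hx0]
  field_simp
  linarith [localFreq_sq hν.le hx.le]

lemma hasDerivAt_wkbPhase_order (hν : 0 < ν) (hx : ν < x) :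
    HasDerivAt (fun η ↦ wkbPhase η x) (-arccos (ν / x)) ν := by
  have hx0 : 0 < x := hν.trans hx
  have hω := localFreq_pos hν.le hx
  have harccos := (hasDerivAt_arccos (x := ν / x) (by linarith [div_pos hν hx0])
    ((div_lt_one hx0).2 hx).ne).comp ν ((hasDerivAt_id ν).div_const x)
  refine ((hasDerivAt_localFreq_order hν.le hx).sub
    ((hasDerivAt_id ν).mul harccos)).congr_deriv ?_
  simp only [id, Function.comp_apply, sqrt_one_sub_div_sq hx0]
  field_simp
  ring

lemma continuousOn_wkbPhase (hν : 0 < ν) : ContinuousOn (wkbPhase ν) (Ici ν) :=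
  (continuous_localFreq ν).continuousOn.sub <| continuousOn_const.mul <|
    continuous_arccos.comp_continuousOn <|
      continuousOn_const.div continuousOn_id fun _ hx ↦ (hν.trans_le hx).ne'

lemma wkbPhase_self (hν : 0 < ν) : wkbPhase ν ν = 0 := by
  simp [wkbPhase, hν.ne']

lemma monotoneOn_wkbPhase (hν : 0 < ν) : MonotoneOn (wkbPhase ν) (Ici ν) :=
  monotoneOn_Ici_of_hasDerivAt_nonneg (continuousOn_wkbPhase hν)
    (fun _ hx ↦ hasDerivAt_wkbPhase hν hx)
    fun _ hx ↦ div_nonneg (localFreq_nonneg _ _) (hν.trans hx).le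

lemma wkbPhase_nonneg (hν : 0 < ν) (hx : ν ≤ x) : 0 ≤ wkbPhase ν x :=
  (wkbPhase_self hν).symm.trans_le
    (monotoneOn_wkbPhase hν self_mem_Ici hx hx)

lemma wkbPhase_le (hν : 0 < ν) (hx : ν ≤ x) : wkbPhase ν x ≤ localFreq ν x ^ 3 / x ^ 2 := by
  have hderiv : ∀ y, ν < y →
      HasDerivAt (fun y ↦ localFreq ν y ^ 3 / y ^ 2 - wkbPhase ν y)
        (localFreq ν y * (2 * ν ^ 2) / y ^ 3) y := by
    intro y hy
    have hy0 : 0 < y := hν.trans hy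
    refine (((hasDerivAt_localFreq_cube hν.le hy).fun_div (hasDerivAt_pow 2 y)
      (by positivity)).sub (hasDerivAt_wkbPhase hν hy)).congr_deriv ?_
    have hsq : ν ^ 2 = y ^ 2 - localFreq ν y ^ 2 := by linarith [localFreq_sq hν.le hy.le]
    rw [hsq]
    field_simp
    push_cast
    ring
  have hcont : ContinuousOn (fun y ↦ localFreq ν y ^ 3 / y ^ 2 - wkbPhase ν y) (Ici ν) := by
    refine ContinuousOn.sub (ContinuousOn.div ((continuous_localFreq ν).pow 3).continuousOn
      (by fun_prop) fun y hy ↦ ?_) (continuousOn_wkbPhase hν)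
    exact (pow_pos (hν.trans_le hy) 2).ne'
  have hmono := monotoneOn_Ici_of_hasDerivAt_nonneg hcont hderiv fun y hy ↦
    div_nonneg (mul_nonneg (localFreq_nonneg _ _) (by positivity)) (pow_pos (hν.trans hy) 3).le
  have hle := hmono self_mem_Ici hx hx
  simp only [wkbPhase_self hν, localFreq_self] at hle
  norm_num at hle
  exact hle

lemma wkbPhase_order_gap {ν₁ ν₂ : ℝ} (hν₁ : 0 < ν₁) (h12 : ν₁ ≤ ν₂) (hx : ν₂ < x) :
    (ν₂ - ν₁) * (localFreq ν₂ x / x) ≤ wkbPhase ν₁ x - wkbPhase ν₂ x := by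
  have hx0 : 0 < x := by linarith
  have hanti : AntitoneOn (fun ν ↦ wkbPhase ν x + ν * (localFreq ν₂ x / x)) (Icc ν₁ ν₂) := by
    refine antitoneOn_of_hasDerivAt_nonpos
      (f' := fun ν ↦ -arccos (ν / x) + 1 * (localFreq ν₂ x / x)) (convex_Icc _ _)
      (fun ν hν ↦ (hasDerivAt_wkbPhase_order (hν₁.trans_le hν.1) (hν.2.trans_lt hx)).add
        ((hasDerivAt_id ν).mul_const _)) fun ν hν ↦ ?_
    have harccos : arccos (ν₂ / x) ≤ arccos (ν / x) := by
      apply arccos_le_arccos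
      gcongr
      exact hν.2
    linarith [localFreq_div_le_arccos (ν := ν₂) hx0]
  have hle := hanti (left_mem_Icc.2 h12) (right_mem_Icc.2 h12) h12
  simp only at hle
  linarith

lemma wkbPhase_argument_gap (hν : 0 < ν) (hx : ν < x) (hxy : x ≤ y) :
    (y - x) * (localFreq ν x / x) ≤ wkbPhase ν y - wkbPhase ν x := by
  have hmono : MonotoneOn (fun z ↦ wkbPhase ν z - z * (localFreq ν x / x)) (Ici x) :=
    monotoneOn_of_hasDerivAt_nonneg
      (f' := fun z ↦ localFreq ν z / z - 1 * (localFreq ν x / x)) (convex_Ici _)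
      (fun z hz ↦ (hasDerivAt_wkbPhase hν (hx.trans_le hz)).sub
        ((hasDerivAt_id z).mul_const _)) fun z hz ↦ by
        linarith [localFreq_div_mono hν hx hz]
  have hle := hmono self_mem_Ici hxy hxy
  simp only at hle
  linarith

lemma wkbError_pos (hν : 0 < ν) (hx : ν < x) : 0 < wkbError ν x :=
  div_pos (pow_pos (hν.trans hx) 2) (pow_pos (localFreq_pos hν.le hx) 3)

lemma wkbPhase_mul_wkbError_le_one (hν : 0 < ν) (hx : ν < x) :
    wkbPhase ν x * wkbError ν x ≤ 1 := by
  have hx0 : 0 < x := hν.trans hx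
  have hω := localFreq_pos hν.le hx
  calc wkbPhase ν x * wkbError ν x ≤ localFreq ν x ^ 3 / x ^ 2 * wkbError ν x :=
        mul_le_mul_of_nonneg_right (wkbPhase_le hν hx.le) (wkbError_pos hν hx).le
    _ = 1 := by unfold wkbError; field_simp

lemma hasDerivAt_wkbError (hν : 0 < ν) (hx : ν < x) :
    HasDerivAt (wkbError ν) (-(x * (x ^ 2 + 2 * ν ^ 2)) / localFreq ν x ^ 5) x := by
  have hω := localFreq_pos hν.le hx
  refine ((hasDerivAt_pow 2 x).div (hasDerivAt_localFreq_cube hν.le hx)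
    (by positivity)).congr_deriv ?_
  have hsq : ν ^ 2 = x ^ 2 - localFreq ν x ^ 2 := by linarith [localFreq_sq hν.le hx.le]
  rw [hsq]
  push_cast
  field_simp
  ring

lemma antitoneOn_wkbError (hν : 0 < ν) : AntitoneOn (wkbError ν) (Ioi ν) := by
  refine antitoneOn_of_hasDerivAt_nonpos (convex_Ioi ν)
    (fun x hx ↦ hasDerivAt_wkbError hν hx) fun x hx ↦ ?_
  have hx0 : 0 < x := hν.trans hx
  exact div_nonpos_of_nonpos_of_nonneg (neg_nonpos.2 (by positivity))
    (pow_nonneg (localFreq_nonneg _ _) 5)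

lemma hasDerivAt_wkbTail (hν : 0 < ν) (hx : ν < x) :
    HasDerivAt (wkbTail ν) (-x ^ 3 / localFreq ν x ^ 5) x := by
  have hω := localFreq_pos hν.le hx
  refine (((hasDerivAt_const x (1 : ℝ)).div (hasDerivAt_localFreq hν.le hx) hω.ne').add
    ((hasDerivAt_const x (ν ^ 2)).div ((hasDerivAt_localFreq_cube hν.le hx).const_mul 3)
      (by positivity))).congr_deriv ?_
  have hsq : ν ^ 2 = x ^ 2 - localFreq ν x ^ 2 := by linarith [localFreq_sq hν.le hx.le]
  rw [hsq]
  field_simp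
  ring

lemma wkbTail_nonneg (ν x : ℝ) : 0 ≤ wkbTail ν x := by
  have hω := localFreq_nonneg ν x
  unfold wkbTail
  positivity

lemma wkbTail_le_wkbError (hν : 0 < ν) (hx : ν < x) : wkbTail ν x ≤ wkbError ν x := by
  have hω := localFreq_pos hν.le hx
  have hsq : x ^ 2 = localFreq ν x ^ 2 + ν ^ 2 := by linarith [localFreq_sq hν.le hx.le]
  have herr : wkbError ν x = 1 / localFreq ν x + ν ^ 2 / localFreq ν x ^ 3 := by
    rw [wkbError, hsq]
    field_simp
  rw [herr, wkbTail]
  gcongr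
  linarith [pow_pos hω 3]

lemma tendsto_wkbError (hν : 0 < ν) : Tendsto (wkbError ν) atTop (𝓝 0) := by
  have hlim : Tendsto (fun x : ℝ ↦ 8 / x) atTop (𝓝 0) := tendsto_const_nhds.div_atTop tendsto_id
  refine squeeze_zero' ?_ ?_ hlim
  · filter_upwards [eventually_gt_atTop ν] with x hx using (wkbError_pos hν hx).le
  · filter_upwards [eventually_ge_atTop (2 * ν)] with x hx
    have hx0 : 0 < x := by linarith
    have hω : x / 2 ≤ localFreq ν x := le_sqrt_of_sq_le (by nlinarith)
    calc wkbError ν x ≤ x ^ 2 / (x / 2) ^ 3 := by unfold wkbError; gcongr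
      _ = 8 / x := by field_simp; norm_num

lemma tendsto_wkbTail (hν : 0 < ν) : Tendsto (wkbTail ν) atTop (𝓝 0) := by
  refine squeeze_zero' (.of_forall (wkbTail_nonneg ν)) ?_ (tendsto_wkbError hν)
  filter_upwards [eventually_gt_atTop ν] with x hx using wkbTail_le_wkbError hν hx

lemma tendsto_localFreq_sub_id (hν : 0 < ν) :
    Tendsto (fun x ↦ localFreq ν x - x) atTop (𝓝 0) := by
  have hlim : Tendsto (fun x : ℝ ↦ -ν ^ 2 / x) atTop (𝓝 0) :=
    tendsto_const_nhds.div_atTop tendsto_id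
  refine tendsto_of_tendsto_of_tendsto_of_le_of_le' hlim tendsto_const_nhds ?_ ?_ <;>
    filter_upwards [eventually_gt_atTop ν] with x hx <;>
    have hx0 : 0 < x := hν.trans hx <;>
    have hω := localFreq_pos hν.le hx <;>
    have hsq := localFreq_sq hν.le hx.le
  · rw [div_le_iff₀ hx0]
    nlinarith
  · nlinarith

lemma tendsto_wkbPhase_sub (hν : 0 < ν) :
    Tendsto (fun x ↦ wkbPhase ν x - (x - ν * π / 2)) atTop (𝓝 0) := by
  have hdiv : Tendsto (fun x : ℝ ↦ ν / x) atTop (𝓝 0) := tendsto_const_nhds.div_atTop tendsto_id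
  have harccos : Tendsto (fun x ↦ arccos (ν / x)) atTop (𝓝 (π / 2)) :=
    arccos_zero ▸ (continuous_arccos.tendsto 0).comp hdiv
  have hlim := (tendsto_localFreq_sub_id hν).sub ((harccos.sub_const (π / 2)).const_mul ν)
  simp only [sub_self, mul_zero] at hlim
  refine hlim.congr fun x ↦ ?_
  unfold wkbPhase
  ring

end Phase

/-! ### Solutions of Bessel's equation -/

/-- `f` solves Bessel's equation `x² f'' + x f' + (x² - ν²) f = 0` on `(0, ∞)` and `f'` is its
derivative there. -/
structure IsBesselSolution (ν : ℝ) (f f' : ℝ → ℝ) : Prop where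
  hasDerivAt : ∀ x, 0 < x → HasDerivAt f (f' x) x
  hasDerivAt_deriv : ∀ x, 0 < x → HasDerivAt f' (-f' x / x - (1 - ν ^ 2 / x ^ 2) * f x) x

namespace IsBesselSolution

variable {ν x a b : ℝ} {f f' : ℝ → ℝ}

lemma neg (h : IsBesselSolution ν f f') :
    IsBesselSolution ν (fun x ↦ -f x) (fun x ↦ -f' x) where
  hasDerivAt x hx := (h.hasDerivAt x hx).neg
  hasDerivAt_deriv x hx := (h.hasDerivAt_deriv x hx).neg.congr_deriv (by ring)

lemma continuousOn (h : IsBesselSolution ν f f') : ContinuousOn f (Ioi 0) :=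
  fun x hx ↦ (h.hasDerivAt x hx).continuousAt.continuousWithinAt

lemma continuousOn_deriv (h : IsBesselSolution ν f f') : ContinuousOn f' (Ioi 0) :=
  fun x hx ↦ (h.hasDerivAt_deriv x hx).continuousAt.continuousWithinAt

lemma hasDerivAt_mul_deriv (h : IsBesselSolution ν f f') (hx : 0 < x) :
    HasDerivAt (fun x ↦ x * f' x) (-((x ^ 2 - ν ^ 2) / x) * f x) x := by
  refine ((hasDerivAt_id x).mul (h.hasDerivAt_deriv x hx)).congr_deriv ?_
  simp only [id]
  field_simp
  ring

lemma hasDerivAt_sq (h : IsBesselSolution ν f f') (hx : 0 < x) :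
    HasDerivAt (fun x ↦ f x ^ 2) (2 * (f x * (x * f' x)) / x) x := by
  refine ((h.hasDerivAt x hx).pow 2).congr_deriv ?_
  push_cast
  field_simp

end IsBesselSolution

lemma lipschitzWith_besselField {ν a t : ℝ} (ha : 0 < a) (hat : a ≤ t) :
    LipschitzWith (1 / a + 1 + ν ^ 2 / a ^ 2).toNNReal
      (fun y : ℝ × ℝ ↦ (y.2, -y.2 / t - (1 - ν ^ 2 / t ^ 2) * y.1)) := by
  have ht : 0 < t := ha.trans_le hat
  have hK : 0 ≤ 1 / a + ν ^ 2 / a ^ 2 := by positivity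
  refine LipschitzWith.of_dist_le_mul fun y z ↦ ?_
  rw [coe_toNNReal _ (by linarith), dist_eq_norm, dist_eq_norm]
  set w := y - z
  have hw₁ : |w.1| ≤ ‖w‖ := norm_fst_le w
  have hw₂ : |w.2| ≤ ‖w‖ := norm_snd_le w
  refine norm_prod_le_iff.2 ⟨?_, ?_⟩
  · refine hw₂.trans ?_
    nlinarith [norm_nonneg w]
  · have hcoef : |1 - ν ^ 2 / t ^ 2| ≤ 1 + ν ^ 2 / a ^ 2 := by
      have hle : ν ^ 2 / t ^ 2 ≤ ν ^ 2 / a ^ 2 := by gcongr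
      have h0 : 0 ≤ ν ^ 2 / t ^ 2 := by positivity
      rw [abs_le]
      constructor <;> linarith
    have hinv : |1 / t| ≤ 1 / a := by
      rw [abs_of_pos (by positivity)]
      gcongr
    calc ‖(-y.2 / t - (1 - ν ^ 2 / t ^ 2) * y.1) - (-z.2 / t - (1 - ν ^ 2 / t ^ 2) * z.1)‖
        = |-(1 / t * w.2) - (1 - ν ^ 2 / t ^ 2) * w.1| := by
          rw [norm_eq_abs]
          congr 1
          simp only [w, Prod.fst_sub, Prod.snd_sub]
          ring
      _ ≤ |1 / t| * |w.2| + |1 - ν ^ 2 / t ^ 2| * |w.1| := by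
          rw [← abs_mul, ← abs_mul, ← abs_neg (1 / t * w.2)]
          exact abs_sub _ _
      _ ≤ 1 / a * ‖w‖ + (1 + ν ^ 2 / a ^ 2) * ‖w‖ := by gcongr
      _ = (1 / a + 1 + ν ^ 2 / a ^ 2) * ‖w‖ := by ring

namespace IsBesselSolution

variable {ν x a b : ℝ} {f f' : ℝ → ℝ}

lemma eq_zero_of_initial_eq_zero (h : IsBesselSolution ν f f') {x₀ : ℝ} (hx₀ : 0 < x₀)
    (h0 : f x₀ = 0) (h0' : f' x₀ = 0) (hx : 0 < x) : f x = 0 := by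
  set a := min x₀ x / 2
  have hmin : 0 < min x₀ x := lt_min hx₀ hx
  have ha : 0 < a := half_pos hmin
  have hmem : ∀ y ∈ ({x₀, x} : Set ℝ), y ∈ Ioo a (max x₀ x + 1) := by
    rintro y (rfl | rfl)
    · exact ⟨(half_lt_self hmin).trans_le (min_le_left _ _), by linarith [le_max_left y x]⟩
    · exact ⟨(half_lt_self hmin).trans_le (min_le_right _ _), by linarith [le_max_right x₀ y]⟩
  have heq := ODE_solution_unique_of_mem_Ioo (s := fun _ ↦ univ)
    (v := fun t y ↦ (y.2, -y.2 / t - (1 - ν ^ 2 / t ^ 2) * y.1))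
    (f := fun t ↦ (f t, f' t)) (g := fun _ ↦ (0, 0))
    (fun t ht ↦ (lipschitzWith_besselField (ν := ν) ha ht.1.le).lipschitzOnWith)
    (hmem x₀ (by simp))
    (fun t ht ↦ ⟨(h.hasDerivAt t (ha.trans ht.1)).prodMk (h.hasDerivAt_deriv t (ha.trans ht.1)),
      mem_univ _⟩)
    (fun t _ ↦ ⟨(hasDerivAt_const t _).congr_deriv (by simp; rfl), mem_univ _⟩)
    (by simp [h0, h0'])
  exact congrArg Prod.fst (heq (hmem x (by simp)))

lemma monotoneOn_mul_deriv (h : IsBesselSolution ν f f') :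
    MonotoneOn (fun x ↦ f x * (x * f' x)) (Ioc 0 ν) := by
  refine monotoneOn_of_hasDerivAt_nonneg (convex_Ioc _ _)
    (fun x hx ↦ (h.hasDerivAt x hx.1).mul (h.hasDerivAt_mul_deriv hx.1)) fun x ⟨hx0, hxν⟩ ↦ ?_
  have hcoef : 0 ≤ (ν ^ 2 - x ^ 2) / x := div_nonneg (by nlinarith) hx0.le
  calc 0 ≤ x * f' x ^ 2 + (ν ^ 2 - x ^ 2) / x * f x ^ 2 := by positivity
    _ = f' x * (x * f' x) + f x * (-((x ^ 2 - ν ^ 2) / x) * f x) := by ring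

/-- Otherwise `(f²)' ≤ -2 c / x` near `0` for some `c > 0`, and `f²` would blow up
logarithmically. -/
lemma mul_deriv_nonneg_of_bounded (h : IsBesselSolution ν f f') {M : ℝ}
    (hM : ∀ x, 0 < x → |f x| ≤ M) (hx : x ∈ Ioc 0 ν) : 0 ≤ f x * (x * f' x) := by
  by_contra! hneg
  set c := -(f x * (x * f' x)) with hc
  have hcpos : 0 < c := neg_pos.2 hneg
  have hanti : AntitoneOn (fun y ↦ f y ^ 2 + 2 * c * log y) (Ioc 0 x) := by
    refine antitoneOn_of_hasDerivAt_nonpos (convex_Ioc _ _)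
      (fun y hy ↦ (h.hasDerivAt_sq hy.1).add ((hasDerivAt_log hy.1.ne').const_mul (2 * c)))
      fun y hy ↦ ?_
    have hle : f y * (y * f' y) ≤ -c := by
      simpa [hc] using h.monotoneOn_mul_deriv ⟨hy.1, hy.2.trans hx.2⟩ hx hy.2
    calc 2 * (f y * (y * f' y)) / y + 2 * c * y⁻¹ = 2 * (f y * (y * f' y) + c) / y := by ring
      _ ≤ 0 := div_nonpos_of_nonpos_of_nonneg (by linarith) hy.1.le
  set y := x * exp (-(M ^ 2 + 1) / (2 * c)) with hy
  have hy0 : 0 < y := mul_pos hx.1 (exp_pos _)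
  have hyx : y ≤ x := mul_le_of_le_one_right hx.1.le <| exp_le_one_iff.2 <|
    div_nonpos_of_nonpos_of_nonneg (by nlinarith) (by positivity)
  have hlog : 2 * c * log y = 2 * c * log x - (M ^ 2 + 1) := by
    rw [hy, log_mul hx.1.ne' (exp_pos _).ne', log_exp]
    field_simp
    ring
  have hfy : f y ^ 2 ≤ M ^ 2 := sq_le_sq' (abs_le.1 (hM y hy0)).1 (abs_le.1 (hM y hy0)).2
  have hle := hanti ⟨hy0, hyx⟩ ⟨hx.1, le_rfl⟩ hyx
  simp only [hlog] at hle
  linarith [sq_nonneg (f x)]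

lemma deriv_eq_zero_of_eqOn_Ioo (h : IsBesselSolution ν f f') (ha : 0 ≤ a) (hx : x ∈ Ioo a b)
    (hf : ∀ y ∈ Ioo a b, f y = 0) : f' x = 0 := by
  have hev : (fun _ ↦ (0 : ℝ)) =ᶠ[nhds x] f := by
    filter_upwards [Ioo_mem_nhds hx.1 hx.2] with y hy using (hf y hy).symm
  exact ((h.hasDerivAt x (ha.trans_lt hx.1)).congr_of_eventuallyEq hev).unique
    (hasDerivAt_const _ _)

lemma ne_zero_of_le_order (h : IsBesselSolution ν f f') {M : ℝ}
    (hM : ∀ x, 0 < x → |f x| ≤ M) (hne : ∃ x, 0 < x ∧ f x ≠ 0) (hx : x ∈ Ioc 0 ν) :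
    f x ≠ 0 := by
  intro hfx
  have hmono : MonotoneOn (fun y ↦ f y ^ 2) (Ioc 0 ν) :=
    monotoneOn_of_hasDerivAt_nonneg (convex_Ioc _ _) (fun y hy ↦ h.hasDerivAt_sq hy.1)
      fun y hy ↦ div_nonneg (mul_nonneg zero_le_two (h.mul_deriv_nonneg_of_bounded hM hy)) hy.1.le
  have hzero : ∀ y ∈ Ioo 0 x, f y = 0 := fun y hy ↦ by
    have hle := hmono ⟨hy.1, hy.2.le.trans hx.2⟩ hx hy.2.le
    simp only [hfx] at hle
    nlinarith [sq_nonneg (f y)]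
  have hhalf : x / 2 ∈ Ioo 0 x := ⟨half_pos hx.1, half_lt_self hx.1⟩
  obtain ⟨y, hy, hfy⟩ := hne
  exact hfy (h.eq_zero_of_initial_eq_zero hhalf.1 (hzero _ hhalf)
    (h.deriv_eq_zero_of_eqOn_Ioo le_rfl hhalf hzero) hy)

end IsBesselSolution

lemma pos_of_forall_nonneg_imp_ne_zero {f : ℝ → ℝ} {a b : ℝ} (hf : ContinuousOn f (Icc a b))
    (ha : 0 < f a) (hstep : ∀ z ∈ Icc a b, (∀ y ∈ Icc a z, 0 ≤ f y) → f z ≠ 0)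
    {x : ℝ} (hx : x ∈ Icc a b) : 0 < f x := by
  have hivt : ∀ y ∈ Icc a b, f y ≤ 0 → ∃ w ∈ Icc a y, f w = 0 := fun y hy hfy ↦
    intermediate_value_Icc' hy.1 (hf.mono (Icc_subset_Icc_right hy.2)) ⟨hfy, ha.le⟩
  by_contra! hfx
  obtain ⟨w, hw, hfw⟩ := hivt x hx hfx
  have hcompact : IsCompact (Icc a b ∩ f ⁻¹' {0}) := isCompact_Icc.of_isClosed_subset
    (hf.preimage_isClosed_of_isClosed isClosed_Icc isClosed_singleton) inter_subset_left
  obtain ⟨z, ⟨hz, hfz⟩, hleast⟩ :=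
    hcompact.exists_isLeast ⟨w, ⟨hw.1, hw.2.trans hx.2⟩, hfw⟩
  refine hstep z hz (fun y hy ↦ ?_) hfz
  by_contra! hfy
  obtain ⟨u, hu, hfu⟩ := hivt y ⟨hy.1, hy.2.trans hz.2⟩ hfy.le
  have hzu : z ≤ u := hleast ⟨⟨hu.1, hu.2.trans (hy.2.trans hz.2)⟩, hfu⟩
  have hyz : y = z := le_antisymm hy.2 (hzu.trans hu.2)
  exact hfy.ne (hyz ▸ hfz)

namespace IsBesselSolution

variable {ν x a b : ℝ} {f f' : ℝ → ℝ}

/-- Sturm comparison: while `f ≥ 0`, the Wronskian `x (f' v - f v')` increases, so `f / v` does. -/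
lemma pos_of_supersolution (h : IsBesselSolution ν f f') (ha : 0 < a) {v v' w : ℝ → ℝ}
    (hv : ∀ y ∈ Icc a b, HasDerivAt v (v' y) y)
    (hv' : ∀ y ∈ Icc a b, HasDerivAt (fun y ↦ y * v' y) (w y) y)
    (hpos : ∀ y ∈ Icc a b, 0 < v y)
    (hsuper : ∀ y ∈ Icc a b, w y ≤ -((y ^ 2 - ν ^ 2) / y) * v y)
    (hfa : 0 < f a) (hstart : f a * (a * v' a) ≤ a * f' a * v a) (hx : x ∈ Icc a b) :
    0 < f x := by
  refine pos_of_forall_nonneg_imp_ne_zero (h.continuousOn.mono fun y hy ↦ ha.trans_le hy.1) hfa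
    (fun z hz hnonneg ↦ ?_) hx
  have hsub : Icc a z ⊆ Icc a b := Icc_subset_Icc_right hz.2
  have hwronskian : MonotoneOn (fun y ↦ y * f' y * v y - f y * (y * v' y)) (Icc a z) := by
    refine monotoneOn_of_hasDerivAt_nonneg (convex_Icc _ _)
      (fun y hy ↦ ((h.hasDerivAt_mul_deriv (ha.trans_le hy.1)).mul (hv y (hsub hy))).sub
        ((h.hasDerivAt y (ha.trans_le hy.1)).mul (hv' y (hsub hy)))) fun y hy ↦ ?_
    have hmul := mul_le_mul_of_nonneg_left (hsuper y (hsub hy)) (hnonneg y hy)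
    calc 0 ≤ f y * (-((y ^ 2 - ν ^ 2) / y) * v y) - f y * w y := sub_nonneg.2 hmul
      _ = _ := by ring
  have hquot : MonotoneOn (fun y ↦ f y / v y) (Icc a z) := by
    refine monotoneOn_of_hasDerivAt_nonneg (convex_Icc _ _)
      (fun y hy ↦ (h.hasDerivAt y (ha.trans_le hy.1)).div (hv y (hsub hy)) (hpos y (hsub hy)).ne')
      fun y hy ↦ div_nonneg ?_ (sq_nonneg _)
    have hle : 0 ≤ y * (f' y * v y - f y * v' y) := by
      have := hwronskian (left_mem_Icc.2 hz.1) hy hy.1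
      simp only at this
      linarith
    exact nonneg_of_mul_nonneg_right hle (ha.trans_le hy.1)
  have hle : f a / v a ≤ f z / v z :=
    hquot (left_mem_Icc.2 hz.1) (right_mem_Icc.2 hz.1) hz.1
  have hpos_z : 0 < f z / v z :=
    (div_pos hfa (hpos a (left_mem_Icc.2 (hx.1.trans hx.2)))).trans_le hle
  exact fun hfz ↦ by simp [hfz] at hpos_z

end IsBesselSolution

section TransitionZone

variable {ν w T X : ℝ}

lemma supersolution_inequality (hν : 1 / 2 ≤ ν) (hw : 0 < w)
    (hwν : 3 / 2 * w ^ 3 = w ^ 2 + ν ^ 2) (hT0 : 0 ≤ T) (hT : T ≤ w ^ 2) :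
    2 * w ^ 4 * T ≤ 16 * T ^ 2 + 24 * T * ν ^ 2 + 8 * ν ^ 4 := by
  rcases le_total w (4 / 3) with hsmall | hlarge
  · have hw45 : 4 / 5 ≤ w := by
      by_contra! hlt
      have hcube : w ^ 2 * (3 / 2 * w - 1) ≤ w ^ 2 * (1 / 5) := by gcongr; linarith
      nlinarith
    have hw4 : w ^ 4 ≤ 12 * ν ^ 2 := by
      have : 0 ≤ w ^ 2 * (18 * w - 12 - w ^ 2) := mul_nonneg (by positivity) (by nlinarith)
      linarith
    have hmul : w ^ 4 * T ≤ 12 * ν ^ 2 * T := by gcongr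
    nlinarith [sq_nonneg T, sq_nonneg (ν ^ 2)]
  · have hw3 : 3 / 4 * w ^ 3 ≤ ν ^ 2 := by
      have : 0 ≤ w ^ 2 * (3 / 4 * w - 1) := mul_nonneg (by positivity) (by linarith)
      linarith
    have hw6 : (3 / 4 * w ^ 3) ^ 2 ≤ (ν ^ 2) ^ 2 := by gcongr
    have hmul : w ^ 4 * T ≤ w ^ 4 * w ^ 2 := by gcongr
    nlinarith [sq_nonneg T, mul_nonneg hT0 (sq_nonneg ν)]

lemma exists_wkbError_eq (hν : 0 < ν) : ∃ X, ν < X ∧ wkbError ν X = 3 / 2 := by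
  have hroot : (0 : ℝ) ∈ Icc (3 / 2 * (0 : ℝ) ^ 3 - 0 ^ 2 - ν ^ 2)
      (3 / 2 * (1 + ν) ^ 3 - (1 + ν) ^ 2 - ν ^ 2) := by
    constructor
    · nlinarith
    · nlinarith [pow_pos hν 3]
  obtain ⟨w, hw, hw0⟩ := intermediate_value_Icc (show (0 : ℝ) ≤ 1 + ν by linarith)
    (f := fun w ↦ 3 / 2 * w ^ 3 - w ^ 2 - ν ^ 2) (by fun_prop) hroot
  simp only at hw0
  have hwpos : 0 < w := lt_of_le_of_ne hw.1 fun h ↦ by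
    rw [← h] at hw0
    nlinarith
  have hX : √(w ^ 2 + ν ^ 2) ^ 2 = w ^ 2 + ν ^ 2 := sq_sqrt (by positivity)
  refine ⟨√(w ^ 2 + ν ^ 2), lt_sqrt_of_sq_lt (by nlinarith), ?_⟩
  rw [wkbError, localFreq, hX, add_sub_cancel_right, sqrt_sq hwpos.le,
    div_eq_iff (pow_pos hwpos 3).ne']
  linarith

lemma supersolution_inequality_of_wkbError_eq (hν : 1 / 2 ≤ ν) (hX : ν < X)
    (hE : wkbError ν X = 3 / 2) (hT0 : 0 ≤ T) (hT : T ≤ X ^ 2 - ν ^ 2) :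
    2 * (X ^ 2 - ν ^ 2) ^ 2 * T ≤ 16 * T ^ 2 + 24 * T * ν ^ 2 + 8 * ν ^ 4 := by
  have hν0 : 0 ≤ ν := by linarith
  have hω := localFreq_pos hν0 hX
  have hsq := localFreq_sq hν0 hX.le
  rw [wkbError, div_eq_iff (by positivity)] at hE
  rw [← hsq] at hT ⊢
  rw [← pow_mul]
  exact supersolution_inequality hν hω (by linarith) hT0 hT

/-- With `Q = ω(X)²`, the function `1 - (y² - ν²)² / (2 Q²)` is a positive supersolution on
`[ν, X]`. -/
lemma IsBesselSolution.pos_of_mem_transition {f f' : ℝ → ℝ} (h : IsBesselSolution ν f f')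
    (hν : 1 / 2 ≤ ν) (hX : ν < X) (hE : wkbError ν X = 3 / 2) (hpos : 0 < f ν) (hd : 0 ≤ f' ν)
    {x : ℝ} (hx : x ∈ Icc ν X) : 0 < f x := by
  have hν0 : 0 < ν := by linarith
  set Q := X ^ 2 - ν ^ 2 with hQ
  have hQpos : 0 < Q := by nlinarith
  have hmem : ∀ y ∈ Icc ν X, 0 ≤ y ^ 2 - ν ^ 2 ∧ y ^ 2 - ν ^ 2 ≤ Q := fun y hy ↦
    ⟨by nlinarith [hy.1], by nlinarith [hy.1, hy.2]⟩
  refine h.pos_of_supersolution hν0 (v := fun y ↦ 1 - (y ^ 2 - ν ^ 2) ^ 2 / (2 * Q ^ 2))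
    (v' := fun y ↦ -2 * (y ^ 2 - ν ^ 2) * y / Q ^ 2)
    (w := fun y ↦ -4 * y * (y ^ 2 + (y ^ 2 - ν ^ 2)) / Q ^ 2)
    (fun y _ ↦ ?_) (fun y _ ↦ ?_) (fun y hy ↦ ?_) (fun y hy ↦ ?_) hpos ?_ hx
  · refine ((((hasDerivAt_pow 2 y).sub_const (ν ^ 2)).pow 2).div_const (2 * Q ^ 2)).const_sub 1
      |>.congr_deriv ?_
    field_simp
    push_cast
    ring
  · refine ((hasDerivAt_id y).mul (((((hasDerivAt_pow 2 y).sub_const (ν ^ 2)).const_mul (-2)).mul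
      (hasDerivAt_id y)).div_const (Q ^ 2))).congr_deriv ?_
    simp only [id, Pi.mul_apply]
    field_simp
    push_cast
    ring
  · have hle : (y ^ 2 - ν ^ 2) ^ 2 / (2 * Q ^ 2) ≤ Q ^ 2 / (2 * Q ^ 2) := by
      gcongr
      exacts [(hmem y hy).1, (hmem y hy).2]
    have hhalf : Q ^ 2 / (2 * Q ^ 2) = 1 / 2 := by field_simp
    linarith
  · have hy0 : 0 < y := hν0.trans_le hy.1
    obtain ⟨hT0, hT⟩ := hmem y hy
    have hineq := supersolution_inequality_of_wkbError_eq hν hX hE hT0 hT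
    rw [← hQ] at hineq
    rw [← sub_nonneg]
    have hnum : 0 ≤ (y ^ 2 - ν ^ 2) ^ 3 + (16 * (y ^ 2 - ν ^ 2) ^ 2 +
        24 * (y ^ 2 - ν ^ 2) * ν ^ 2 + 8 * ν ^ 4 - 2 * Q ^ 2 * (y ^ 2 - ν ^ 2)) :=
      add_nonneg (by positivity) (by linarith)
    calc 0 ≤ _ / (2 * Q ^ 2 * y) := div_nonneg hnum (by positivity)
      _ = _ := by field_simp; ring
  · simp only [sub_self]
    norm_num
    positivity

end TransitionZone

/-! ### The Prüfer angle -/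

section ComplexLogarithm

lemma exists_clog_of_ne_zero {a x₀ : ℝ} (hx₀ : a < x₀) {z z' : ℝ → ℂ}
    (hz : ∀ x, a < x → HasDerivAt z (z' x) x) (hz' : ContinuousOn z' (Ioi a))
    (hne : ∀ x, a < x → z x ≠ 0) :
    ∃ L : ℝ → ℂ, L x₀ = Complex.log (z x₀) ∧
      ∀ x, a < x → HasDerivAt L (z' x / z x) x ∧ Complex.exp (L x) = z x := by
  have hquot : ContinuousOn (fun x ↦ z' x / z x) (Ioi a) :=
    hz'.div (fun x hx ↦ (hz x hx).continuousAt.continuousWithinAt) hne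
  set L : ℝ → ℂ := fun x ↦ Complex.log (z x₀) + ∫ t in x₀..x, z' t / z t
  have hLx₀ : L x₀ = Complex.log (z x₀) := by simp [L]
  have hL : ∀ x, a < x → HasDerivAt L (z' x / z x) x := fun x hx ↦ by
    refine (intervalIntegral.integral_hasDerivAt_right
      (hquot.mono fun y hy ↦ ?_).intervalIntegrable
      (hquot.stronglyMeasurableAtFilter isOpen_Ioi x hx)
      (hquot.continuousAt (Ioi_mem_nhds hx))).const_add _
    exact (lt_min hx₀ hx).trans_le hy.1
  have hconst : ∀ y, a < y → HasDerivAt (fun y ↦ z y * Complex.exp (-L y)) 0 y := fun y hy ↦ by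
    have := hne y hy
    refine ((hz y hy).mul (hL y hy).neg.cexp).congr_deriv ?_
    field_simp
    simp
  refine ⟨L, hLx₀, fun x hx ↦ ⟨hL x hx, ?_⟩⟩
  have heq : z x * Complex.exp (-L x) = z x₀ * Complex.exp (-L x₀) :=
    isOpen_Ioi.is_const_of_deriv_eq_zero (isPreconnected_Ioi (a := a))
      (fun y hy ↦ (hconst y hy).differentiableAt.differentiableWithinAt)
      (fun y hy ↦ (hconst y hy).deriv) hx hx₀
  rw [hLx₀, Complex.exp_neg, Complex.exp_neg, Complex.exp_log (hne _ hx₀),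
    mul_inv_cancel₀ (hne _ hx₀), mul_inv_eq_one₀ (Complex.exp_ne_zero _)] at heq
  exact heq.symm

end ComplexLogarithm

/-- `θ` is a Prüfer angle of the solution `f` of Bessel's equation beyond the turning point `ν`:
the argument of `x f' + i ω f`. It satisfies a first-order equation and is a multiple of `π`
exactly at the zeros of `f`. -/
structure IsPruferAngle (ν : ℝ) (f θ : ℝ → ℝ) : Prop where
  hasDerivAt : ∀ x, ν < x → HasDerivAt θ
    (localFreq ν x / x + x / localFreq ν x ^ 2 * (sin (θ x) * cos (θ x))) x
  eq_zero_iff : ∀ x, ν < x → (f x = 0 ↔ sin (θ x) = 0)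

/-- The vector `x f' + i ω f` whose argument is the Prüfer angle. -/
noncomputable def pruferVector (ν : ℝ) (f f' : ℝ → ℝ) (x : ℝ) : ℂ :=
  (x * f' x : ℝ) + (localFreq ν x * f x : ℝ) * Complex.I

/-- The derivative of `pruferVector` along a solution of Bessel's equation. -/
noncomputable def pruferVelocity (ν : ℝ) (f f' : ℝ → ℝ) (x : ℝ) : ℂ :=
  (-((x ^ 2 - ν ^ 2) / x) * f x : ℝ) +
    (x / localFreq ν x * f x + localFreq ν x * f' x : ℝ) * Complex.I

lemma re_pruferVector (ν : ℝ) (f f' : ℝ → ℝ) (x : ℝ) : (pruferVector ν f f' x).re = x * f' x := by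
  simp [pruferVector]

lemma im_pruferVector (ν : ℝ) (f f' : ℝ → ℝ) (x : ℝ) :
    (pruferVector ν f f' x).im = localFreq ν x * f x := by
  simp [pruferVector]

lemma im_pruferVelocity_div_pruferVector {ν x ρ φ : ℝ} {f f' : ℝ → ℝ} (hν : 0 < ν) (hx : ν < x)
    (hρ : 0 < ρ) (hre : ρ * cos φ = x * f' x) (him : ρ * sin φ = localFreq ν x * f x) :
    (pruferVelocity ν f f' x / pruferVector ν f f' x).im =
      localFreq ν x / x + x / localFreq ν x ^ 2 * (sin φ * cos φ) := by
  have hx0 := hν.trans hx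
  have hω := localFreq_pos hν.le hx
  have hf : f x = ρ * sin φ / localFreq ν x := by rw [him]; field_simp
  have hf' : f' x = ρ * cos φ / x := by rw [hre]; field_simp
  have hnorm : Complex.normSq (pruferVector ν f f' x) = ρ ^ 2 := by
    rw [pruferVector, ← hre, ← him, Complex.normSq_add_mul_I]
    linear_combination ρ ^ 2 * sin_sq_add_cos_sq φ
  have hvre : (pruferVelocity ν f f' x).re = -((x ^ 2 - ν ^ 2) / x) * f x := by
    simp only [pruferVelocity, Complex.add_re, Complex.ofReal_re, Complex.re_ofReal_mul,
      Complex.I_re, mul_zero, add_zero]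
  have hvim : (pruferVelocity ν f f' x).im = x / localFreq ν x * f x + localFreq ν x * f' x := by
    simp only [pruferVelocity, Complex.add_im, Complex.ofReal_im, Complex.im_ofReal_mul,
      Complex.I_im, mul_one, zero_add]
  rw [Complex.div_im, hnorm, re_pruferVector, im_pruferVector, hvre, hvim, hf, hf',
    ← localFreq_sq hν.le hx.le]
  field_simp
  linear_combination localFreq ν x ^ 3 * sin_sq_add_cos_sq φ

namespace IsBesselSolution

variable {ν x : ℝ} {f f' : ℝ → ℝ}

lemma hasDerivAt_pruferVector (h : IsBesselSolution ν f f') (hν : 0 < ν) (hx : ν < x) :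
    HasDerivAt (pruferVector ν f f') (pruferVelocity ν f f' x) x :=
  (h.hasDerivAt_mul_deriv (hν.trans hx)).ofReal_comp.add
    ((((hasDerivAt_localFreq hν.le hx).mul
      (h.hasDerivAt x (hν.trans hx))).ofReal_comp).mul_const Complex.I)

lemma continuousOn_pruferVelocity (h : IsBesselSolution ν f f') (hν : 0 < ν) :
    ContinuousOn (pruferVelocity ν f f') (Ioi ν) := by
  have hsub : Ioi ν ⊆ Ioi (0 : ℝ) := Ioi_subset_Ioi hν.le
  have hf := h.continuousOn.mono hsub
  have hf' := h.continuousOn_deriv.mono hsub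
  have hω := (continuous_localFreq ν).continuousOn (s := Ioi ν)
  refine (Complex.continuous_ofReal.comp_continuousOn <| ContinuousOn.mul ?_ hf).add
    ((Complex.continuous_ofReal.comp_continuousOn <|
      ((continuousOn_id.div hω ?_).mul hf).add (hω.mul hf')).mul continuousOn_const)
  · exact ((by fun_prop : ContinuousOn (fun x : ℝ ↦ x ^ 2 - ν ^ 2) (Ioi ν)).div continuousOn_id
      fun x hx ↦ (hν.trans hx).ne').neg
  · exact fun x hx ↦ (localFreq_pos hν.le hx).ne'

lemma pruferVector_ne_zero (h : IsBesselSolution ν f f') (hν : 0 < ν)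
    (hne : ∃ x, 0 < x ∧ f x ≠ 0) (hx : ν < x) : pruferVector ν f f' x ≠ 0 := by
  intro hzero
  have hx0 := hν.trans hx
  have hre : x * f' x = 0 := by rw [← re_pruferVector ν, hzero, Complex.zero_re]
  have him : localFreq ν x * f x = 0 := by rw [← im_pruferVector ν f f', hzero, Complex.zero_im]
  obtain ⟨y, hy, hfy⟩ := hne
  exact hfy <| h.eq_zero_of_initial_eq_zero hx0
    ((mul_eq_zero.1 him).resolve_left (localFreq_pos hν.le hx).ne')
    ((mul_eq_zero.1 hre).resolve_left hx0.ne') hy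

lemma exists_pruferAngle (h : IsBesselSolution ν f f') (hν : 0 < ν) (hne : ∃ x, 0 < x ∧ f x ≠ 0)
    {X : ℝ} (hX : ν < X) (hfX : 0 < f X) :
    ∃ θ, IsPruferAngle ν f θ ∧ θ X ∈ Ioo 0 π := by
  obtain ⟨L, hLX, hL⟩ := exists_clog_of_ne_zero hX
    (fun x hx ↦ h.hasDerivAt_pruferVector hν hx) (h.continuousOn_pruferVelocity hν)
    fun x hx ↦ h.pruferVector_ne_zero hν hne hx
  have hre : ∀ x, ν < x → exp (L x).re * cos (L x).im = x * f' x := fun x hx ↦ by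
    rw [← Complex.exp_re, (hL x hx).2, re_pruferVector]
  have him : ∀ x, ν < x → exp (L x).re * sin (L x).im = localFreq ν x * f x := fun x hx ↦ by
    rw [← Complex.exp_im, (hL x hx).2, im_pruferVector]
  refine ⟨fun x ↦ (L x).im, ⟨fun x hx ↦ ?_, fun x hx ↦ ?_⟩, ?_⟩
  · exact (Complex.imCLM.hasFDerivAt.comp_hasDerivAt x (hL x hx).1).congr_deriv
      (im_pruferVelocity_div_pruferVector hν hx (exp_pos _) (hre x hx) (him x hx))
  · rw [← mul_eq_zero_iff_left (localFreq_pos hν.le hx).ne', ← him x hx,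
      mul_eq_zero_iff_left (exp_pos _).ne']
  · have himX : 0 < (pruferVector ν f f' X).im := by
      rw [im_pruferVector]
      exact mul_pos (localFreq_pos hν.le hX) hfX
    simp only [hLX, Complex.log_im]
    refine ⟨(Complex.arg_nonneg_iff.2 himX.le).lt_of_ne fun h0 ↦ ?_,
      (Complex.arg_le_pi _).lt_of_ne fun hπ ↦ ?_⟩
    · exact himX.ne' (Complex.arg_eq_zero_iff.1 h0.symm).2
    · exact himX.ne' (Complex.arg_eq_pi_iff.1 hπ).2

end IsBesselSolution

section PhaseLimit

open Filter Topology

lemma exists_tendsto_of_antitoneOn_monotoneOn {U V : ℝ → ℝ} {a : ℝ} (hU : AntitoneOn U (Ioi a))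
    (hV : MonotoneOn V (Ioi a)) (hVU : ∀ x, a < x → V x ≤ U x)
    (hlim : Tendsto (fun x ↦ U x - V x) atTop (𝓝 0)) :
    ∃ c, Tendsto U atTop (𝓝 c) ∧ ∀ x, a < x → V x ≤ c ∧ c ≤ U x := by
  have hmem : ∀ x, a < max (a + 1) x := fun x ↦ (lt_add_one a).trans_le (le_max_left _ _)
  have hanti : Antitone fun x ↦ U (max (a + 1) x) := fun x y hxy ↦
    hU (hmem x) (hmem y) (max_le_max le_rfl hxy)
  have hbdd : BddBelow (range fun x ↦ U (max (a + 1) x)) := by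
    refine ⟨V (a + 1), ?_⟩
    rintro _ ⟨x, rfl⟩
    exact (hV (lt_add_one a) (hmem x) (le_max_left _ _)).trans (hVU _ (hmem x))
  set c := ⨅ x, U (max (a + 1) x)
  have hUc : Tendsto U atTop (𝓝 c) := by
    refine (tendsto_atTop_ciInf hanti hbdd).congr' ?_
    filter_upwards [eventually_ge_atTop (a + 1)] with x hx
    rw [max_eq_right hx]
  have hVc : Tendsto V atTop (𝓝 c) := by simpa using hUc.sub hlim
  refine ⟨c, hUc, fun x hx ↦ ⟨ge_of_tendsto hVc ?_, le_of_tendsto hUc ?_⟩⟩ <;>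
    filter_upwards [eventually_ge_atTop x] with y hy
  · exact hV hx (hx.trans_le hy) hy
  · exact hU hx (hx.trans_le hy) hy

namespace IsPruferAngle

variable {ν : ℝ} {f θ : ℝ → ℝ}

/-- Since `E ω / x = x / ω²`, differentiating `cos² θ` cancels the oscillating term of `θ' - S'` to
leading order. -/
lemma antitoneOn_sub_wkbPhase_add (hθ : IsPruferAngle ν f θ) (hν : 0 < ν) :
    AntitoneOn (fun x ↦ θ x - wkbPhase ν x + wkbError ν x / 2 * cos (θ x) ^ 2) (Ioi ν) := by
  refine antitoneOn_of_hasDerivAt_nonpos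
    (f' := fun x ↦ -(x * (x ^ 2 + 2 * ν ^ 2) / localFreq ν x ^ 5 / 2 * cos (θ x) ^ 2 +
      x ^ 3 / localFreq ν x ^ 5 * (sin (θ x) * cos (θ x)) ^ 2)) (convex_Ioi ν)
    (fun x hx ↦ ?_) fun x hx ↦ ?_ <;>
    have hx0 : 0 < x := hν.trans hx <;>
    have hω := localFreq_pos hν.le hx
  · refine (((hθ.hasDerivAt x hx).sub (hasDerivAt_wkbPhase hν hx)).add
      (((hasDerivAt_wkbError hν hx).div_const 2).mul
        ((hθ.hasDerivAt x hx).cos.pow 2))).congr_deriv ?_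
    simp only [Pi.pow_apply, wkbError]
    push_cast
    field_simp
    ring
  · exact neg_nonpos.2 (by positivity)

lemma monotoneOn_sub_wkbPhase_sub (hθ : IsPruferAngle ν f θ) (hν : 0 < ν) :
    MonotoneOn (fun x ↦ θ x - wkbPhase ν x - wkbError ν x / 2 * sin (θ x) ^ 2 - wkbTail ν x / 4)
      (Ioi ν) := by
  refine monotoneOn_of_hasDerivAt_nonneg
    (f' := fun x ↦ x * (x ^ 2 + 2 * ν ^ 2) / localFreq ν x ^ 5 / 2 * sin (θ x) ^ 2 +
      x ^ 3 / localFreq ν x ^ 5 * (1 / 4 - (sin (θ x) * cos (θ x)) ^ 2)) (convex_Ioi ν)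
    (fun x hx ↦ ?_) fun x hx ↦ ?_ <;>
    have hx0 : 0 < x := hν.trans hx <;>
    have hω := localFreq_pos hν.le hx
  · refine ((((hθ.hasDerivAt x hx).sub (hasDerivAt_wkbPhase hν hx)).sub
      (((hasDerivAt_wkbError hν hx).div_const 2).mul ((hθ.hasDerivAt x hx).sin.pow 2))).sub
      ((hasDerivAt_wkbTail hν hx).div_const 4)).congr_deriv ?_
    simp only [Pi.pow_apply, wkbError]
    push_cast
    field_simp
    ring
  · have hsincos : 0 ≤ 1 / 4 - (sin (θ x) * cos (θ x)) ^ 2 := by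
      have := sin_sq_add_cos_sq (θ x)
      nlinarith [sq_nonneg (sin (θ x) ^ 2 - cos (θ x) ^ 2)]
    positivity

lemma exists_tendsto_sub_wkbPhase (hθ : IsPruferAngle ν f θ) (hν : 0 < ν) :
    ∃ c, Tendsto (fun x ↦ θ x - wkbPhase ν x) atTop (𝓝 c) ∧
      ∀ x, ν < x →
        θ x - wkbPhase ν x - c ∈ Icc (-(wkbError ν x / 2)) (3 / 4 * wkbError ν x) := by
  have hgap : ∀ x, (θ x - wkbPhase ν x + wkbError ν x / 2 * cos (θ x) ^ 2) -
      (θ x - wkbPhase ν x - wkbError ν x / 2 * sin (θ x) ^ 2 - wkbTail ν x / 4) =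
      wkbError ν x / 2 + wkbTail ν x / 4 := fun x ↦ by
    linear_combination wkbError ν x / 2 * sin_sq_add_cos_sq (θ x)
  obtain ⟨c, hlim, hbound⟩ := exists_tendsto_of_antitoneOn_monotoneOn
    (hθ.antitoneOn_sub_wkbPhase_add hν) (hθ.monotoneOn_sub_wkbPhase_sub hν)
    (fun x hx ↦ by
      have := hgap x
      linarith [wkbError_pos hν hx, wkbTail_nonneg ν x])
    (by
      simp only [hgap]
      simpa using ((tendsto_wkbError hν).div_const 2).add ((tendsto_wkbTail hν).div_const 4))
  have hcos : Tendsto (fun x ↦ wkbError ν x / 2 * cos (θ x) ^ 2) atTop (𝓝 0) := by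
    have hE : Tendsto (fun x ↦ wkbError ν x / 2) atTop (𝓝 0) := by
      simpa using (tendsto_wkbError hν).div_const 2
    refine hE.zero_mul_isBoundedUnder_le (isBoundedUnder_of ⟨1, fun x ↦ ?_⟩)
    simpa using cos_sq_le_one (θ x)
  refine ⟨c, by simpa using hlim.sub hcos, fun x hx ↦ ?_⟩
  obtain ⟨hV, hU⟩ := hbound x hx
  have hE := wkbError_pos hν hx
  have hcos_le : wkbError ν x / 2 * cos (θ x) ^ 2 ≤ wkbError ν x / 2 :=
    mul_le_of_le_one_right (by positivity) (cos_sq_le_one _)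
  have hsin_le : wkbError ν x / 2 * sin (θ x) ^ 2 ≤ wkbError ν x / 2 :=
    mul_le_of_le_one_right (by positivity) (sin_sq_le_one _)
  have hG := wkbTail_le_wkbError hν hx
  constructor <;> linarith

end IsPruferAngle

end PhaseLimit

/-! ### The phase constant -/

section PhaseConstant

open Filter Topology

/-- The large-argument asymptotics `J_ν(x) ~ √(2 / (π x)) cos (x - ν π / 2 - π / 4)` of the Bessel
function, squared: this is all that is needed to pin down the phase, and it is insensitive to the
sign of `f`. -/
def HasBesselAsymptotics (ν : ℝ) (f : ℝ → ℝ) : Prop :=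
  Tendsto (fun x ↦ x * f x ^ 2 - 1 / π * (1 + sin (2 * x - ν * π))) atTop (𝓝 0)

variable {ν c : ℝ} {f f' θ : ℝ → ℝ}

lemma HasBesselAsymptotics.neg (hf : HasBesselAsymptotics ν f) :
    HasBesselAsymptotics ν fun x ↦ -f x := by
  simpa only [HasBesselAsymptotics, neg_sq] using hf

lemma HasBesselAsymptotics.exists_ne_zero (hf : HasBesselAsymptotics ν f) :
    ∃ x, 0 < x ∧ f x ≠ 0 := by
  by_contra! hzero
  have hseq : Tendsto (fun k : ℕ ↦ ν * π / 2 + k * π) atTop atTop :=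
    tendsto_atTop_add_const_left _ _ (tendsto_natCast_atTop_atTop.atTop_mul_const pi_pos)
  have hlim : Tendsto (fun _ : ℕ ↦ -(1 / π)) atTop (𝓝 0) := by
    refine (hf.comp hseq).congr' ?_
    filter_upwards [hseq.eventually_gt_atTop 0] with k hk
    have hphase : 2 * (ν * π / 2 + k * π) - ν * π = 0 + k * (2 * π) := by ring
    simp only [Function.comp_apply, hzero _ hk, hphase, sin_add_nat_mul_two_pi, sin_zero]
    ring
  exact neg_ne_zero.2 (one_div_pos.2 pi_pos).ne' (tendsto_nhds_unique tendsto_const_nhds hlim)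

namespace IsPruferAngle

lemma tendsto_atTop (hν : 0 < ν) (hc : Tendsto (fun x ↦ θ x - wkbPhase ν x) atTop (𝓝 c)) :
    Tendsto θ atTop atTop := by
  refine (tendsto_atTop_add_const_right _ (-(ν * π / 2))
    ((hc.add (tendsto_wkbPhase_sub hν)).add_atTop tendsto_id)).congr fun x ↦ ?_
  simp only [id]
  ring

lemma frequently_eq_int_mul_pi (hθ : IsPruferAngle ν f θ) (hlim : Tendsto θ atTop atTop) :
    ∃ᶠ x in atTop, ν < x ∧ ∃ k : ℤ, θ x = k * π := by
  refine frequently_atTop.2 fun a ↦ ?_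
  set b := max a (ν + 1)
  have hb : ν < b := (lt_add_one ν).trans_le (le_max_right _ _)
  obtain ⟨k, hk⟩ := exists_int_gt (θ b / π)
  rw [div_lt_iff₀ pi_pos] at hk
  obtain ⟨y, hy, hby⟩ := ((hlim.eventually_ge_atTop (k * π)).and (eventually_ge_atTop b)).exists
  have hcont : ContinuousOn θ (Icc b y) := fun t ht ↦
    (hθ.hasDerivAt t (hb.trans_le ht.1)).continuousAt.continuousWithinAt
  obtain ⟨t, ht, hθt⟩ := intermediate_value_Icc hby hcont ⟨hk.le, hy⟩
  exact ⟨t, (le_max_left _ _).trans ht.1, hb.trans_le ht.1, k, hθt⟩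

/-- Along the zeros of `f`, where `θ` is a multiple of `π`, the asymptotics of `x * f x ^ 2` must
vanish. -/
lemma sin_two_mul_eq_one (hθ : IsPruferAngle ν f θ) (hν : 0 < ν) (hf : HasBesselAsymptotics ν f)
    (hc : Tendsto (fun x ↦ θ x - wkbPhase ν x) atTop (𝓝 c)) : sin (2 * c) = 1 := by
  have hphase : Tendsto (fun x ↦ (2 * θ x - 2 * c) - (2 * x - ν * π)) atTop (𝓝 0) := by
    have := ((hc.add (tendsto_wkbPhase_sub hν)).const_mul 2).sub_const (2 * c)
    simp only [add_zero, sub_self] at this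
    exact this.congr fun x ↦ by ring
  have hsin : Tendsto (fun x ↦ sin (2 * θ x - 2 * c) - sin (2 * x - ν * π)) atTop (𝓝 0) :=
    squeeze_zero_norm (fun x ↦ abs_sin_sub_sin_le _ _) (by simpa using hphase.abs)
  have hfθ : Tendsto (fun x ↦ x * f x ^ 2 - 1 / π * (1 + sin (2 * θ x - 2 * c)))
      atTop (𝓝 0) := by
    have := hf.sub (hsin.const_mul (1 / π))
    simp only [mul_zero, sub_self] at this
    exact this.congr fun x ↦ by ring
  have hconst : ∃ᶠ x in atTop, x * f x ^ 2 - 1 / π * (1 + sin (2 * θ x - 2 * c)) =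
      -(1 / π) * (1 - sin (2 * c)) := by
    refine (hθ.frequently_eq_int_mul_pi (tendsto_atTop hν hc)).mono ?_
    rintro x ⟨hx, k, hk⟩
    have harg : 2 * (k * π) - 2 * c = -(2 * c) + k * (2 * π) := by ring
    rw [(hθ.eq_zero_iff x hx).2 (by rw [hk, sin_int_mul_pi]), hk, harg,
      sin_add_int_mul_two_pi, sin_neg]
    ring
  have hzero : -(1 / π) * (1 - sin (2 * c)) = 0 := by
    by_contra hne
    exact hconst (hfθ.eventually_ne (Ne.symm hne))
  have := (mul_eq_zero.1 hzero).resolve_left (neg_ne_zero.2 (one_div_pos.2 pi_pos).ne')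
  linarith

end IsPruferAngle

lemma eq_pi_div_four_of_sin_two_mul_eq_one (hsin : sin (2 * c) = 1)
    (hc : c ∈ Ioo (-(3 * π / 4)) (5 * π / 4)) : c = π / 4 := by
  obtain ⟨n, hn⟩ := (cos_eq_one_iff _).1 ((cos_sub_pi_div_two (2 * c)).trans hsin)
  have hπ := pi_pos
  have hn_lt : (n : ℝ) < 1 := by nlinarith [hc.2]
  have hn_gt : (-1 : ℝ) < n := by nlinarith [hc.1]
  have hn0 : n = 0 := by
    have h₁ : n < 1 := mod_cast hn_lt
    have h₂ : -1 < n := mod_cast hn_gt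
    omega
  rw [hn0, Int.cast_zero, zero_mul] at hn
  linarith

/-- `f` has no zero up to the point `X` where the WKB approximation becomes effective, and from
there on its Prüfer angle follows the WKB phase `wkbPhase ν x + π / 4`. -/
structure HasWKBPhase (ν : ℝ) (f : ℝ → ℝ) (X : ℝ) (θ : ℝ → ℝ) : Prop where
  order_lt : ν < X
  wkbError_eq : wkbError ν X = 3 / 2
  ne_zero : ∀ x ∈ Ioc 0 X, f x ≠ 0
  angle_mem : θ X ∈ Ioo 0 π
  isPruferAngle : IsPruferAngle ν f θ
  abs_sub_le : ∀ x, ν < x → |θ x - wkbPhase ν x - π / 4| ≤ 3 / 4 * wkbError ν x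

lemma HasWKBPhase.of_neg {X : ℝ} (h : HasWKBPhase ν (fun x ↦ -f x) X θ) :
    HasWKBPhase ν f X θ where
  order_lt := h.order_lt
  wkbError_eq := h.wkbError_eq
  ne_zero x hx := neg_ne_zero.1 (h.ne_zero x hx)
  angle_mem := h.angle_mem
  isPruferAngle := ⟨h.isPruferAngle.hasDerivAt,
    fun x hx ↦ neg_eq_zero.symm.trans (h.isPruferAngle.eq_zero_iff x hx)⟩
  abs_sub_le := h.abs_sub_le

namespace IsBesselSolution

lemma exists_hasWKBPhase_of_pos (h : IsBesselSolution ν f f') (hν : 1 / 2 ≤ ν) {M : ℝ}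
    (hM : ∀ x, 0 < x → |f x| ≤ M) (hf : HasBesselAsymptotics ν f) (hpos : 0 < f ν) :
    ∃ X θ, HasWKBPhase ν f X θ := by
  have hν0 : 0 < ν := by linarith
  obtain ⟨X, hX, hE⟩ := exists_wkbError_eq hν0
  have hderiv : 0 ≤ f' ν := nonneg_of_mul_nonneg_right
    (nonneg_of_mul_nonneg_right (h.mul_deriv_nonneg_of_bounded hM ⟨hν0, le_rfl⟩) hpos) hν0
  have hposX : ∀ x ∈ Icc ν X, 0 < f x := fun x hx ↦
    h.pos_of_mem_transition hν hX hE hpos hderiv hx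
  obtain ⟨θ, hθ, hθX⟩ := h.exists_pruferAngle hν0 hf.exists_ne_zero hX (hposX X ⟨hX.le, le_rfl⟩)
  obtain ⟨c, hc, hbound⟩ := hθ.exists_tendsto_sub_wkbPhase hν0
  have hcmem : c ∈ Ioo (-(3 * π / 4)) (5 * π / 4) := by
    have hcX := hbound X hX
    have hSX := wkbPhase_mul_wkbError_le_one hν0 hX
    have hS0 := wkbPhase_nonneg hν0 hX.le
    rw [hE] at hcX hSX
    have hπ := pi_gt_three
    constructor <;> linarith [hcX.1, hcX.2, hθX.1, hθX.2]
  obtain rfl := eq_pi_div_four_of_sin_two_mul_eq_one (hθ.sin_two_mul_eq_one hν0 hf hc) hcmem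
  refine ⟨X, θ, hX, hE, fun x hx ↦ ?_, hθX, hθ, fun x hx ↦ ?_⟩
  · rcases le_total x ν with hxν | hνx
    · exact h.ne_zero_of_le_order hM hf.exists_ne_zero ⟨hx.1, hxν⟩
    · exact (hposX x ⟨hνx, hx.2⟩).ne'
  · obtain ⟨hlower, hupper⟩ := hbound x hx
    exact abs_le.2 ⟨by linarith [wkbError_pos hν0 hx], hupper⟩

lemma exists_hasWKBPhase (h : IsBesselSolution ν f f') (hν : 1 / 2 ≤ ν) {M : ℝ}
    (hM : ∀ x, 0 < x → |f x| ≤ M) (hf : HasBesselAsymptotics ν f) :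
    ∃ X θ, HasWKBPhase ν f X θ := by
  rcases (h.ne_zero_of_le_order hM hf.exists_ne_zero ⟨by linarith, le_rfl⟩ : f ν ≠ 0).lt_or_gt
    with hneg | hpos
  · obtain ⟨X, θ, hθ⟩ := h.neg.exists_hasWKBPhase_of_pos hν
      (fun x hx ↦ (abs_neg _).trans_le (hM x hx)) hf.neg (neg_pos.2 hneg)
    exact ⟨X, θ, hθ.of_neg⟩
  · exact h.exists_hasWKBPhase_of_pos hν hM hf hpos

end IsBesselSolution

end PhaseConstant

/-! ### Bessel's equation from the integral representation -/

section AngerIntegral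

lemma hasDerivAt_intervalIntegral_mul_comp {p q ψ φ φ' : ℝ → ℝ} {C : ℝ} (hp : Continuous p)
    (hq : Continuous q) (hψ : Continuous ψ) (hφ : ∀ y, HasDerivAt φ (φ' y) y)
    (hφ' : Continuous φ') (hC : ∀ y, |φ' y| ≤ C) (a b x : ℝ) :
    HasDerivAt (fun x ↦ ∫ t in a..b, q t * φ (x * p t - ψ t))
      (∫ t in a..b, q t * p t * φ' (x * p t - ψ t)) x := by
  have hφc : Continuous φ := continuous_iff_continuousAt.2 fun y ↦ (hφ y).continuousAt
  refine (intervalIntegral.hasDerivAt_integral_of_dominated_loc_of_deriv_le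
    (s := univ) (bound := fun t ↦ |q t * p t| * C) (F := fun x t ↦ q t * φ (x * p t - ψ t))
    (F' := fun x t ↦ q t * p t * φ' (x * p t - ψ t)) Filter.univ_mem
    (.of_forall fun x ↦ Continuous.aestronglyMeasurable (by fun_prop))
    (Continuous.intervalIntegrable (by fun_prop) _ _)
    (Continuous.aestronglyMeasurable (by fun_prop)) (.of_forall fun t _ y _ ↦ ?_)
    (Continuous.intervalIntegrable (by fun_prop) _ _) (.of_forall fun t _ y _ ↦ ?_)).2
  · rw [norm_mul]
    exact mul_le_mul_of_nonneg_left (hC _) (norm_nonneg _)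
  · have harg : HasDerivAt (fun y ↦ y * p t - ψ t) (p t) y := by
      simpa using ((hasDerivAt_id y).mul_const (p t)).sub_const (ψ t)
    exact (((hφ _).comp y harg).const_mul (q t)).congr_deriv (by ring)

/-- The oscillatory integral in the representation of `J_ν` (the Anger function times `π`). -/
noncomputable def angerIntegral (ν x : ℝ) : ℝ := ∫ θ in (0 : ℝ)..π, cos (x * sin θ - ν * θ)

/-- The first derivative of `angerIntegral ν`. -/
noncomputable def angerIntegralDeriv (ν x : ℝ) : ℝ :=
  ∫ θ in (0 : ℝ)..π, sin θ * -sin (x * sin θ - ν * θ)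

/-- The second derivative of `angerIntegral ν`. -/
noncomputable def angerIntegralDeriv2 (ν x : ℝ) : ℝ :=
  ∫ θ in (0 : ℝ)..π, sin θ * sin θ * -cos (x * sin θ - ν * θ)

lemma hasDerivAt_angerIntegral (ν x : ℝ) :
    HasDerivAt (angerIntegral ν) (angerIntegralDeriv ν x) x := by
  have h := hasDerivAt_intervalIntegral_mul_comp (q := fun _ ↦ 1)
    (ψ := fun θ ↦ ν * θ) (φ' := fun y ↦ -sin y) (C := 1) continuous_sin continuous_const
    (by fun_prop) hasDerivAt_cos (by fun_prop) (fun y ↦ by simpa using abs_sin_le_one y) 0 π x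
  simp only [one_mul] at h
  exact h

lemma hasDerivAt_angerIntegralDeriv (ν x : ℝ) :
    HasDerivAt (angerIntegralDeriv ν) (angerIntegralDeriv2 ν x) x :=
  hasDerivAt_intervalIntegral_mul_comp (ψ := fun θ ↦ ν * θ) (φ' := fun y ↦ -cos y) (C := 1)
    continuous_sin continuous_sin (by fun_prop) (fun y ↦ (hasDerivAt_sin y).neg) (by fun_prop)
    (fun y ↦ by simpa using abs_cos_le_one y) 0 π x

lemma hasDerivAt_anger_primitive (ν x θ : ℝ) :
    HasDerivAt (fun θ ↦ (x * cos θ + ν) * sin (x * sin θ - ν * θ))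
      (x ^ 2 * (sin θ * sin θ * -cos (x * sin θ - ν * θ)) +
        x * (sin θ * -sin (x * sin θ - ν * θ)) + (x ^ 2 - ν ^ 2) * cos (x * sin θ - ν * θ)) θ := by
  have hphase : HasDerivAt (fun θ ↦ x * sin θ - ν * θ) (x * cos θ - ν * 1) θ :=
    ((hasDerivAt_sin θ).const_mul x).sub ((hasDerivAt_id θ).const_mul ν)
  refine ((((hasDerivAt_cos θ).const_mul x).add_const ν).mul hphase.sin).congr_deriv ?_
  linear_combination x ^ 2 * cos (x * sin θ - ν * θ) * sin_sq_add_cos_sq θ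

lemma angerIntegral_ode (ν x : ℝ) :
    x ^ 2 * angerIntegralDeriv2 ν x + x * angerIntegralDeriv ν x +
      (x ^ 2 - ν ^ 2) * angerIntegral ν x = (x - ν) * sin (ν * π) := by
  have hFTC := intervalIntegral.integral_eq_sub_of_hasDerivAt (a := 0) (b := π)
    (fun θ _ ↦ hasDerivAt_anger_primitive ν x θ)
    (Continuous.intervalIntegrable (by fun_prop) _ _)
  rw [intervalIntegral.integral_add, intervalIntegral.integral_add,
    intervalIntegral.integral_const_mul, intervalIntegral.integral_const_mul,
    intervalIntegral.integral_const_mul] at hFTC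
  · rw [angerIntegral, angerIntegralDeriv, angerIntegralDeriv2, hFTC]
    simp
    ring
  all_goals exact Continuous.intervalIntegrable (by fun_prop) _ _

lemma abs_angerIntegral_le (ν x : ℝ) : |angerIntegral ν x| ≤ π := by
  simpa [angerIntegral, abs_of_pos pi_pos] using
    intervalIntegral.norm_integral_le_of_norm_le_const (a := 0) (b := π) (C := 1)
      (f := fun θ ↦ cos (x * sin θ - ν * θ)) fun θ _ ↦ abs_cos_le_one _

end AngerIntegral

section SchlafliMoment

open Filter Topology

lemma pow_mul_exp_neg_mul_le {a s : ℝ} (ha : 0 < a) (hs : 0 ≤ s) (k : ℕ) :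
    s ^ k * exp (-a * s) ≤ k.factorial / a ^ k := by
  have hexp := pow_div_factorial_le_exp (a * s) (by positivity) k
  rw [div_le_iff₀ (by positivity), mul_pow] at hexp
  rw [neg_mul, exp_neg, ← div_eq_mul_inv, div_le_div_iff₀ (exp_pos _) (by positivity)]
  linarith

lemma integral_exp_neg_mul_Ioi {a : ℝ} (ha : 0 < a) :
    ∫ t in Ioi (0 : ℝ), exp (-a * t) = 1 / a := by
  rw [integral_exp_mul_Ioi (neg_lt_zero.2 ha)]
  simp

/-- The `k`-th moment of the exponentially decaying integral in the representation of `J_ν`; up to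
sign, the `k`-th derivative of that integral. -/
noncomputable def schlafliMoment (ν : ℝ) (k : ℕ) (x : ℝ) : ℝ :=
  ∫ t in Ioi (0 : ℝ), sinh t ^ k * exp (-x * sinh t - ν * t)

variable {ν x : ℝ}

lemma integrableOn_schlafli (hν : 0 < ν) (hx : 0 < x) (k : ℕ) :
    IntegrableOn (fun t ↦ sinh t ^ k * exp (-x * sinh t - ν * t)) (Ioi 0) := by
  refine Integrable.mono' ((exp_neg_integrableOn_Ioi 0 hν).const_mul (k.factorial / x ^ k))
    (Continuous.aestronglyMeasurable (by fun_prop)) ?_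
  filter_upwards [ae_restrict_mem measurableSet_Ioi] with t ht
  have hsinh : 0 ≤ sinh t := sinh_nonneg_iff.2 (le_of_lt ht)
  rw [Real.norm_of_nonneg (by positivity), sub_eq_add_neg, exp_add, ← mul_assoc, ← neg_mul]
  exact mul_le_mul_of_nonneg_right (pow_mul_exp_neg_mul_le hx hsinh k) (exp_pos _).le

lemma hasDerivAt_schlafliMoment (hν : 0 < ν) (hx : 0 < x) (k : ℕ) :
    HasDerivAt (schlafliMoment ν k) (-schlafliMoment ν (k + 1) x) x := by
  rw [schlafliMoment, ← integral_neg]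
  refine (hasDerivAt_integral_of_dominated_loc_of_deriv_le
    (s := Ioi (x / 2)) (bound := fun t ↦ sinh t ^ (k + 1) * exp (-(x / 2) * sinh t - ν * t))
    (F := fun x t ↦ sinh t ^ k * exp (-x * sinh t - ν * t))
    (F' := fun x t ↦ -(sinh t ^ (k + 1) * exp (-x * sinh t - ν * t)))
    (Ioi_mem_nhds (half_lt_self hx))
    (.of_forall fun x ↦ Continuous.aestronglyMeasurable (by fun_prop))
    (integrableOn_schlafli hν hx k) (Continuous.aestronglyMeasurable (by fun_prop)) ?_
    (integrableOn_schlafli hν (half_pos hx) (k + 1)) (.of_forall fun t y _ ↦ ?_)).2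
  · filter_upwards [ae_restrict_mem measurableSet_Ioi] with t ht y hy
    have hsinh : 0 ≤ sinh t := sinh_nonneg_iff.2 (le_of_lt ht)
    have hxy : x / 2 ≤ y := le_of_lt hy
    rw [norm_neg, Real.norm_of_nonneg (by positivity)]
    gcongr
  · have harg : HasDerivAt (fun y ↦ -y * sinh t - ν * t) (-sinh t) y := by
      simpa using ((hasDerivAt_id y).neg.mul_const (sinh t)).sub_const (ν * t)
    exact (harg.exp.const_mul (sinh t ^ k)).congr_deriv (by ring)

lemma cosh_le_one_add_sinh {t : ℝ} (ht : 0 ≤ t) : cosh t ≤ 1 + sinh t := by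
  nlinarith [cosh_sq t, cosh_pos t, sinh_nonneg_iff.2 ht]

lemma tendsto_schlafli_primitive (hν : 0 < ν) (hx : 0 < x) :
    Tendsto (fun t ↦ -((x * cosh t - ν) * exp (-x * sinh t - ν * t))) atTop (𝓝 0) := by
  have hdecay : Tendsto (fun t ↦ (1 + (x + ν)) * exp (-ν * t)) atTop (𝓝 0) := by
    simpa using (tendsto_exp_atBot.comp
      (tendsto_id.const_mul_atTop_of_neg (neg_lt_zero.2 hν))).const_mul (1 + (x + ν))
  refine squeeze_zero_norm' ?_ hdecay
  filter_upwards [eventually_ge_atTop 0] with t ht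
  have hsinh : 0 ≤ sinh t := sinh_nonneg_iff.2 ht
  have hcoeff : |x * cosh t - ν| ≤ x * sinh t + (x + ν) := by
    rw [abs_le]
    constructor <;> nlinarith [cosh_le_one_add_sinh ht, cosh_pos t]
  have hexp : exp (-x * sinh t) ≤ 1 := exp_le_one_iff.2 (by nlinarith)
  have hsinh_exp : sinh t * exp (-x * sinh t) ≤ 1 / x := by
    simpa using pow_mul_exp_neg_mul_le hx hsinh 1
  rw [norm_neg, norm_mul, Real.norm_of_nonneg (exp_pos _).le, Real.norm_eq_abs,
    sub_eq_add_neg (-x * sinh t), exp_add, ← mul_assoc, ← neg_mul]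
  refine mul_le_mul_of_nonneg_right ?_ (exp_pos _).le
  calc |x * cosh t - ν| * exp (-x * sinh t)
      ≤ (x * sinh t + (x + ν)) * exp (-x * sinh t) := by gcongr
    _ = x * (sinh t * exp (-x * sinh t)) + (x + ν) * exp (-x * sinh t) := by ring
    _ ≤ x * (1 / x) + (x + ν) * 1 := by gcongr
    _ = 1 + (x + ν) := by field_simp

lemma hasDerivAt_schlafli_primitive (ν x t : ℝ) :
    HasDerivAt (fun t ↦ -((x * cosh t - ν) * exp (-x * sinh t - ν * t)))
      (x ^ 2 * (sinh t ^ 2 * exp (-x * sinh t - ν * t)) -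
        x * (sinh t ^ 1 * exp (-x * sinh t - ν * t)) +
        (x ^ 2 - ν ^ 2) * (sinh t ^ 0 * exp (-x * sinh t - ν * t))) t := by
  have harg : HasDerivAt (fun t ↦ -x * sinh t - ν * t) (-x * cosh t - ν * 1) t :=
    ((hasDerivAt_sinh t).const_mul (-x)).sub ((hasDerivAt_id t).const_mul ν)
  refine (((((hasDerivAt_cosh t).const_mul x).sub_const ν).mul harg.exp).neg).congr_deriv ?_
  linear_combination x ^ 2 * exp (-x * sinh t - ν * t) * cosh_sq t

lemma schlafliMoment_ode (hν : 0 < ν) (hx : 0 < x) :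
    x ^ 2 * schlafliMoment ν 2 x - x * schlafliMoment ν 1 x +
      (x ^ 2 - ν ^ 2) * schlafliMoment ν 0 x = x - ν := by
  have h₂ := (integrableOn_schlafli hν hx 2).const_mul (x ^ 2)
  have h₁ := (integrableOn_schlafli hν hx 1).const_mul x
  have h₀ := (integrableOn_schlafli hν hx 0).const_mul (x ^ 2 - ν ^ 2)
  have hFTC := integral_Ioi_of_hasDerivAt_of_tendsto (a := 0)
    (Continuous.continuousWithinAt (by fun_prop))
    (fun t _ ↦ hasDerivAt_schlafli_primitive ν x t) ((h₂.sub h₁).add h₀)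
    (tendsto_schlafli_primitive hν hx)
  rw [integral_add _ h₀, integral_sub h₂ h₁, integral_const_mul, integral_const_mul,
    integral_const_mul] at hFTC
  · rw [schlafliMoment, schlafliMoment, schlafliMoment, hFTC]
    simp
  · exact h₂.sub h₁

lemma schlafliMoment_nonneg (ν x : ℝ) (k : ℕ) : 0 ≤ schlafliMoment ν k x := by
  refine setIntegral_nonneg measurableSet_Ioi fun t ht ↦ ?_
  have hsinh : 0 ≤ sinh t := sinh_nonneg_iff.2 (le_of_lt ht)
  positivity

lemma schlafliMoment_zero_le_of_exp_le (hν : 0 < ν) (hx : 0 < x) {a : ℝ} (ha : 0 < a)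
    (hle : ∀ t, 0 < t → a * t ≤ x * sinh t + ν * t) : schlafliMoment ν 0 x ≤ 1 / a := by
  rw [← integral_exp_neg_mul_Ioi ha]
  refine setIntegral_mono_on (integrableOn_schlafli hν hx 0) (exp_neg_integrableOn_Ioi 0 ha)
    measurableSet_Ioi fun t ht ↦ ?_
  rw [pow_zero, one_mul]
  exact exp_le_exp.2 (by linarith [hle t ht])

lemma schlafliMoment_zero_le_one_div_order (hν : 0 < ν) (hx : 0 < x) :
    schlafliMoment ν 0 x ≤ 1 / ν :=
  schlafliMoment_zero_le_of_exp_le hν hx hν fun _ ht ↦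
    le_add_of_nonneg_left (mul_nonneg hx.le (sinh_nonneg_iff.2 ht.le))

lemma schlafliMoment_zero_le_one_div (hν : 0 < ν) (hx : 0 < x) : schlafliMoment ν 0 x ≤ 1 / x :=
  schlafliMoment_zero_le_of_exp_le hν hx hx fun _ ht ↦
    le_add_of_le_of_nonneg (mul_le_mul_of_nonneg_left (self_le_sinh_iff.2 ht.le) hx.le)
      (mul_pos hν ht).le

end SchlafliMoment

section BesselFunction

variable {ν x : ℝ}

lemma besselJ_eq_anger_sub_schlafli (ν x : ℝ) :
    besselJ ν x = 1 / π * angerIntegral ν x - sin (ν * π) / π * schlafliMoment ν 0 x := by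
  simp only [besselJ, angerIntegral, schlafliMoment, pow_zero, one_mul]

lemma isBesselSolution_besselJ (hν : 0 < ν) :
    IsBesselSolution ν (besselJ ν)
      fun x ↦ 1 / π * angerIntegralDeriv ν x - sin (ν * π) / π * -schlafliMoment ν 1 x := by
  rw [funext (besselJ_eq_anger_sub_schlafli ν)]
  refine ⟨fun x hx ↦ ((hasDerivAt_angerIntegral ν x).const_mul _).sub
    ((hasDerivAt_schlafliMoment hν hx 0).const_mul _), fun x hx ↦ ?_⟩
  refine (((hasDerivAt_angerIntegralDeriv ν x).const_mul (1 / π)).sub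
    ((hasDerivAt_schlafliMoment hν hx 1).neg.const_mul (sin (ν * π) / π))).congr_deriv ?_
  have hπ := pi_pos.ne'
  field_simp
  rw [mul_comm π ν]
  linear_combination angerIntegral_ode ν x - sin (ν * π) * schlafliMoment_ode hν hx

lemma abs_besselJ_le (hν : 0 < ν) (hx : 0 < x) : |besselJ ν x| ≤ 1 + 1 / ν := by
  have hmoment := schlafliMoment_nonneg ν x 0
  have hπ : 1 ≤ π := by linarith [pi_gt_three]
  rw [besselJ_eq_anger_sub_schlafli]
  calc |1 / π * angerIntegral ν x - sin (ν * π) / π * schlafliMoment ν 0 x|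
      ≤ |1 / π * angerIntegral ν x| + |sin (ν * π) / π * schlafliMoment ν 0 x| := abs_sub _ _
    _ = |angerIntegral ν x| / π + |sin (ν * π)| / π * schlafliMoment ν 0 x := by
      rw [abs_mul, abs_mul, abs_div, abs_div, abs_of_pos pi_pos, abs_of_nonneg hmoment, abs_one]
      ring
    _ ≤ π / π + 1 / 1 * (1 / ν) := by
      gcongr
      exacts [abs_angerIntegral_le ν x, abs_sin_le_one _,
        schlafliMoment_zero_le_one_div_order hν hx]
    _ = 1 + 1 / ν := by rw [div_self pi_pos.ne', div_one, one_mul]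

end BesselFunction

/-! ### The Fresnel integral -/

section Fresnel

/-- The unimodular exponential `exp (i y)`. -/
noncomputable def expI (y : ℝ) : ℂ := Complex.exp (y * Complex.I)

lemma norm_expI (y : ℝ) : ‖expI y‖ = 1 := Complex.norm_exp_ofReal_mul_I y

lemma expI_zero : expI 0 = 1 := by simp [expI]

lemma expI_add (y z : ℝ) : expI (y + z) = expI y * expI z := by
  rw [expI, expI, expI, ← Complex.exp_add]
  push_cast
  ring_nf

lemma expI_re (y : ℝ) : (expI y).re = cos y := Complex.exp_ofReal_mul_I_re y

lemma expI_im (y : ℝ) : (expI y).im = sin y := Complex.exp_ofReal_mul_I_im y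

@[fun_prop]
lemma continuous_expI : Continuous expI := by
  unfold expI
  fun_prop

lemma hasDerivAt_expI_comp {u : ℝ → ℝ} {u' x : ℝ} (hu : HasDerivAt u u' x) :
    HasDerivAt (fun y ↦ expI (u y)) (expI (u x) * (u' * Complex.I)) x :=
  (hu.ofReal_comp.mul_const Complex.I).cexp

/-- The Fresnel integral `∫₀ˣ exp (-i u²) du`. -/
noncomputable def fresnel (X : ℝ) : ℂ := ∫ u in (0 : ℝ)..X, expI (-u ^ 2)

/-- The integral whose decay at infinity gives the limit of `fresnel X ^ 2`: its derivative cancels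
that of `i * fresnel X ^ 2`, as in the classical evaluation of the Gaussian integral. -/
noncomputable def fresnelRemainder (X : ℝ) : ℂ :=
  ∫ t in (0 : ℝ)..1, expI (-X ^ 2 * (1 + t ^ 2)) * ((1 / (1 + t ^ 2) : ℝ) : ℂ)

lemma fresnel_zero : fresnel 0 = 0 := intervalIntegral.integral_same

lemma hasDerivAt_fresnel (X : ℝ) : HasDerivAt fresnel (expI (-X ^ 2)) X := by
  have hcont : Continuous fun u : ℝ ↦ expI (-u ^ 2) := by fun_prop
  exact intervalIntegral.integral_hasDerivAt_right (hcont.intervalIntegrable _ _)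
    hcont.stronglyMeasurable.stronglyMeasurableAtFilter hcont.continuousAt

lemma mul_integral_expI_eq_fresnel (X : ℝ) :
    X * ∫ t in (0 : ℝ)..1, expI (-(X * t) ^ 2) = fresnel X := by
  simpa [fresnel] using intervalIntegral.smul_integral_comp_mul_left (a := 0) (b := 1)
    (fun u : ℝ ↦ expI (-u ^ 2)) X

lemma expI_neg_sq_mul_one_add_sq (X t : ℝ) :
    expI (-X ^ 2 * (1 + t ^ 2)) = expI (-X ^ 2) * expI (-(X * t) ^ 2) := by
  rw [← expI_add]
  ring_nf

lemma continuous_one_div_one_add_sq : Continuous fun t : ℝ ↦ ((1 / (1 + t ^ 2) : ℝ) : ℂ) :=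
  Complex.continuous_ofReal.comp <|
    continuous_const.div (by fun_prop) fun t ↦ by positivity

lemma hasDerivAt_expI_mul_one_div_one_add_sq (t y : ℝ) :
    HasDerivAt (fun y ↦ expI (-y ^ 2 * (1 + t ^ 2)) * ((1 / (1 + t ^ 2) : ℝ) : ℂ))
      (-2 * y * Complex.I * expI (-y ^ 2 * (1 + t ^ 2))) y := by
  have harg : HasDerivAt (fun y : ℝ ↦ -y ^ 2 * (1 + t ^ 2)) (-(2 * y) * (1 + t ^ 2)) y := by
    simpa using ((hasDerivAt_pow 2 y).neg).mul_const (1 + t ^ 2)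
  have hne : (1 + (t : ℂ) ^ 2) ≠ 0 := mod_cast (by positivity : (1 + t ^ 2 : ℝ) ≠ 0)
  refine ((hasDerivAt_expI_comp harg).mul_const _).congr_deriv ?_
  push_cast
  field_simp

lemma hasDerivAt_fresnelRemainder (X : ℝ) :
    HasDerivAt fresnelRemainder (-2 * Complex.I * expI (-X ^ 2) * fresnel X) X := by
  have hvalue : -2 * Complex.I * expI (-X ^ 2) * fresnel X =
      ∫ t in (0 : ℝ)..1, -2 * X * Complex.I * expI (-X ^ 2 * (1 + t ^ 2)) := by
    simp_rw [expI_neg_sq_mul_one_add_sq]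
    rw [intervalIntegral.integral_const_mul, intervalIntegral.integral_const_mul,
      ← mul_integral_expI_eq_fresnel]
    ring
  have hcont := continuous_one_div_one_add_sq
  rw [hvalue]
  refine (intervalIntegral.hasDerivAt_integral_of_dominated_loc_of_deriv_le
    (s := Metric.ball X 1) (bound := fun _ ↦ 2 * (|X| + 1))
    (F := fun X t ↦ expI (-X ^ 2 * (1 + t ^ 2)) * ((1 / (1 + t ^ 2) : ℝ) : ℂ))
    (F' := fun X t ↦ -2 * X * Complex.I * expI (-X ^ 2 * (1 + t ^ 2)))
    (Metric.ball_mem_nhds _ one_pos)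
    (.of_forall fun x ↦ Continuous.aestronglyMeasurable (by fun_prop))
    (Continuous.intervalIntegrable (by fun_prop) _ _)
    (Continuous.aestronglyMeasurable (by fun_prop)) (.of_forall fun t _ y hy ↦ ?_)
    intervalIntegrable_const
    (.of_forall fun t _ y _ ↦ hasDerivAt_expI_mul_one_div_one_add_sq t y)).2
  have hy' : |y| ≤ |X| + 1 := by
    rw [Metric.mem_ball, Real.dist_eq] at hy
    linarith [abs_sub_abs_le_abs_sub y X]
  rw [norm_mul, norm_expI]
  simpa using hy'

lemma fresnelRemainder_zero : fresnelRemainder 0 = (π / 4 : ℝ) := by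
  simp only [fresnelRemainder, ne_eq, OfNat.ofNat_ne_zero, not_false_eq_true, zero_pow, neg_zero,
    zero_mul, expI_zero, one_mul]
  rw [intervalIntegral.integral_ofReal, integral_one_div_one_add_sq]
  simp

lemma I_mul_fresnel_sq (X : ℝ) :
    Complex.I * fresnel X ^ 2 = (π / 4 : ℝ) - fresnelRemainder X := by
  have hderiv : ∀ x, HasDerivAt (fun X ↦ Complex.I * fresnel X ^ 2 + fresnelRemainder X) 0 x :=
    fun x ↦ ((((hasDerivAt_fresnel x).pow 2).const_mul Complex.I).add
      (hasDerivAt_fresnelRemainder x)).congr_deriv (by push_cast; ring)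
  have hconst := is_const_of_deriv_eq_zero (fun x ↦ (hderiv x).differentiableAt)
    (fun x ↦ (hderiv x).deriv) X 0
  simp only [fresnelRemainder_zero, fresnel_zero] at hconst
  linear_combination hconst

lemma norm_fresnelRemainder_le_one (X : ℝ) : ‖fresnelRemainder X‖ ≤ 1 := by
  have hbound : ∀ t : ℝ,
      ‖expI (-X ^ 2 * (1 + t ^ 2)) * ((1 / (1 + t ^ 2) : ℝ) : ℂ)‖ ≤ 1 := fun t ↦ by
    rw [norm_mul, norm_expI, Complex.norm_real, one_mul, Real.norm_of_nonneg (by positivity),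
      div_le_one (by positivity)]
    linarith [sq_nonneg t]
  simpa [fresnelRemainder] using
    intervalIntegral.norm_integral_le_of_norm_le_const (a := 0) (b := 1) fun t _ ↦ hbound t

lemma norm_fresnel_le (X : ℝ) : ‖fresnel X‖ ≤ 2 := by
  have hsq : ‖Complex.I * fresnel X ^ 2‖ ≤ 2 := by
    rw [I_mul_fresnel_sq]
    refine (norm_sub_le _ _).trans ?_
    rw [Complex.norm_real, Real.norm_of_nonneg (by positivity)]
    linarith [pi_le_four, norm_fresnelRemainder_le_one X]
  rw [norm_mul, Complex.norm_I, one_mul, norm_pow] at hsq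
  nlinarith [norm_nonneg (fresnel X)]

lemma hasDerivAt_one_div_one_add_sq (t : ℝ) :
    HasDerivAt (fun t : ℝ ↦ ((1 / (1 + t ^ 2) : ℝ) : ℂ))
      ((-(2 * t) / (1 + t ^ 2) ^ 2 : ℝ) : ℂ) t := by
  have hden : HasDerivAt (fun t : ℝ ↦ 1 + t ^ 2) (2 * t) t := by
    simpa using (hasDerivAt_pow 2 t).const_add 1
  simp only [one_div]
  exact (hden.inv (by positivity)).ofReal_comp

lemma hasDerivAt_fresnel_mul_left (X t : ℝ) :
    HasDerivAt (fun t ↦ fresnel (X * t)) (X * expI (-(X * t) ^ 2)) t := by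
  have harg : HasDerivAt (fun t : ℝ ↦ X * t) X t := by
    simpa using (hasDerivAt_id t).const_mul X
  exact ((hasDerivAt_fresnel (X * t)).scomp t harg).congr_deriv (by simp)

/-- Integration by parts against the bounded function `fresnel (X * t)`. -/
lemma mul_fresnelRemainder_eq (X : ℝ) :
    X * fresnelRemainder X = expI (-X ^ 2) * ((1 / 2 : ℝ) * fresnel X -
      ∫ t in (0 : ℝ)..1, ((-(2 * t) / (1 + t ^ 2) ^ 2 : ℝ) : ℂ) * fresnel (X * t)) := by
  have hcont : Continuous fun t : ℝ ↦ ((-(2 * t) / (1 + t ^ 2) ^ 2 : ℝ) : ℂ) :=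
    Complex.continuous_ofReal.comp
      (Continuous.div (by fun_prop) (by fun_prop) fun t ↦ by positivity)
  have hparts := intervalIntegral.integral_mul_deriv_eq_deriv_mul (a := 0) (b := 1)
    (fun t _ ↦ hasDerivAt_one_div_one_add_sq t) (fun t _ ↦ hasDerivAt_fresnel_mul_left X t)
    (hcont.intervalIntegrable _ _) (Continuous.intervalIntegrable (by fun_prop) _ _)
  have hboundary : ((1 / (1 + 1 ^ 2) : ℝ) : ℂ) = (1 / 2 : ℝ) := by norm_num
  rw [mul_one, mul_zero, fresnel_zero, mul_zero, sub_zero, hboundary] at hparts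
  rw [← hparts, fresnelRemainder, ← intervalIntegral.integral_const_mul,
    ← intervalIntegral.integral_const_mul]
  refine intervalIntegral.integral_congr fun t _ ↦ ?_
  simp only [expI_neg_sq_mul_one_add_sq]
  ring

lemma norm_fresnelRemainder_le {X : ℝ} (hX : 0 < X) : ‖fresnelRemainder X‖ ≤ 5 / X := by
  have hintegrand : ∀ t ∈ uIoc (0 : ℝ) 1,
      ‖((-(2 * t) / (1 + t ^ 2) ^ 2 : ℝ) : ℂ) * fresnel (X * t)‖ ≤ 2 * 2 := fun t ht ↦ by
    rw [uIoc_of_le zero_le_one] at ht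
    have hweight : ‖-(2 * t) / (1 + t ^ 2) ^ 2‖ ≤ 2 := by
      rw [norm_div, norm_neg, Real.norm_of_nonneg (by linarith [ht.1]),
        Real.norm_of_nonneg (by positivity), div_le_iff₀ (by positivity)]
      nlinarith [ht.1, ht.2, sq_nonneg t, sq_nonneg (t ^ 2)]
    rw [norm_mul, Complex.norm_real]
    gcongr
    exact norm_fresnel_le _
  have hintegral := intervalIntegral.norm_integral_le_of_norm_le_const hintegrand
  have hmul : ‖(X : ℂ) * fresnelRemainder X‖ ≤ 5 := by
    rw [mul_fresnelRemainder_eq, norm_mul, norm_expI, one_mul]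
    refine (norm_sub_le _ _).trans ?_
    have hhalf : ‖((1 / 2 : ℝ) : ℂ)‖ = 1 / 2 := by rw [Complex.norm_real]; norm_num
    rw [sub_zero, abs_one] at hintegral
    rw [norm_mul, hhalf]
    linarith [norm_fresnel_le X]
  rw [norm_mul, Complex.norm_real, Real.norm_of_nonneg hX.le] at hmul
  rw [le_div_iff₀ hX]
  linarith

lemma re_sq_eq_norm_sq_add_re_sq (w : ℂ) : w.re ^ 2 = (‖w ^ 2‖ + (w ^ 2).re) / 2 := by
  rw [norm_pow, Complex.sq_norm, Complex.normSq_apply, pow_two w, Complex.mul_re]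
  ring

lemma fresnel_sq (X : ℝ) :
    fresnel X ^ 2 = -Complex.I * (π / 4 : ℝ) + Complex.I * fresnelRemainder X := by
  linear_combination -Complex.I * I_mul_fresnel_sq X + fresnel X ^ 2 * Complex.I_mul_I

lemma abs_re_expI_mul_fresnel_sq_sub_le {X : ℝ} (hX : 0 < X) (ξ : ℝ) :
    |(expI ξ * fresnel X).re ^ 2 - π / 8 * (1 + sin (2 * ξ))| ≤ 5 / X := by
  have hnorm : |‖fresnel X ^ 2‖ - π / 4| ≤ ‖fresnelRemainder X‖ := by
    have := abs_norm_sub_norm_le (fresnel X ^ 2) (-Complex.I * (π / 4 : ℝ))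
    rwa [fresnel_sq, add_sub_cancel_left, norm_mul (-Complex.I), norm_neg, Complex.norm_I, one_mul,
      Complex.norm_real, Real.norm_of_nonneg (by positivity), norm_mul Complex.I, Complex.norm_I,
      one_mul, ← fresnel_sq] at this
  have hre : (expI (2 * ξ) * fresnel X ^ 2).re =
      π / 4 * sin (2 * ξ) + (expI (2 * ξ) * (Complex.I * fresnelRemainder X)).re := by
    rw [fresnel_sq, mul_add, Complex.add_re]
    congr 1
    simp only [Complex.mul_re, Complex.neg_re, Complex.I_re, Complex.neg_im, Complex.I_im,
      Complex.ofReal_re, Complex.ofReal_im, expI_re, expI_im, Complex.mul_im]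
    ring
  have hrest : |(expI (2 * ξ) * (Complex.I * fresnelRemainder X)).re| ≤ ‖fresnelRemainder X‖ := by
    refine (Complex.abs_re_le_norm _).trans ?_
    rw [norm_mul, norm_mul, norm_expI, Complex.norm_I, one_mul, one_mul]
  have hexp : expI ξ ^ 2 = expI (2 * ξ) := by rw [pow_two, ← expI_add, two_mul]
  rw [re_sq_eq_norm_sq_add_re_sq, mul_pow, hexp, hre, norm_mul, norm_expI, one_mul]
  rw [abs_le] at *
  have := norm_fresnelRemainder_le hX
  constructor <;> linarith [hnorm.1, hnorm.2, hrest.1, hrest.2]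

end Fresnel

/-! ### Asymptotics of the Bessel function -/

section OscillatoryIntegral

variable {a b K : ℝ} {ψ ψ' h h' : ℝ → ℝ}

lemma ae_norm_expI_mul_deriv_le (hK : ∀ t ∈ Ioo a b, |deriv h t| ≤ K) :
    ∀ᵐ t ∂volume.restrict (Ioc a b), ‖expI (ψ t) * ((deriv h t : ℝ) : ℂ)‖ ≤ K := by
  rw [← restrict_Ioo_eq_restrict_Ioc]
  refine (ae_restrict_mem measurableSet_Ioo).mono fun t ht ↦ ?_
  rw [norm_mul, norm_expI, one_mul, Complex.norm_real]
  exact hK t ht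

lemma intervalIntegrable_expI_mul_deriv (hab : a ≤ b) (hψ : Continuous ψ)
    (hK : ∀ t ∈ Ioo a b, |deriv h t| ≤ K) :
    IntervalIntegrable (fun t ↦ expI (ψ t) * ((deriv h t : ℝ) : ℂ)) volume a b := by
  rw [intervalIntegrable_iff, uIoc_of_le hab]
  exact Integrable.mono' (integrable_const K)
    ((by fun_prop : Continuous fun t ↦ expI (ψ t)).aestronglyMeasurable.mul
      (Complex.measurable_ofReal.comp (measurable_deriv h)).aestronglyMeasurable)
    (ae_norm_expI_mul_deriv_le hK)

lemma norm_integral_expI_mul_deriv_le (hab : a ≤ b) (hK : ∀ t ∈ Ioo a b, |deriv h t| ≤ K) :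
    ‖∫ t in a..b, expI (ψ t) * ((deriv h t : ℝ) : ℂ)‖ ≤ K * (b - a) := by
  rw [← abs_of_nonneg (sub_nonneg.2 hab)]
  refine intervalIntegral.norm_integral_le_of_norm_le_const_ae ?_
  rw [uIoc_of_le hab, ← ae_restrict_iff' measurableSet_Ioc]
  exact ae_norm_expI_mul_deriv_le hK

lemma norm_integral_expI_mul_le (hab : a ≤ b) (hψ : ∀ t, HasDerivAt ψ (ψ' t) t)
    (hψ' : Continuous ψ') (hh : ContinuousOn h (Icc a b))
    (hderiv : ∀ t ∈ Ioo a b, HasDerivAt h (h' t) t) (hK : ∀ t ∈ Ioo a b, |h' t| ≤ K) :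
    ‖∫ t in a..b, expI (ψ t) * ((ψ' t * h t : ℝ) : ℂ)‖ ≤ |h a| + |h b| + K * (b - a) := by
  have hψc : Continuous ψ := continuous_iff_continuousAt.2 fun t ↦ (hψ t).continuousAt
  have hexpI : ContinuousOn (fun t ↦ expI (ψ t)) (Icc a b) := by fun_prop
  have hK' : ∀ t ∈ Ioo a b, |deriv h t| ≤ K := fun t ht ↦ (hderiv t ht).deriv ▸ hK t ht
  set D : ℝ → ℂ := fun t ↦ expI (ψ t) * ((ψ' t * h t : ℝ) : ℂ)
  set E : ℝ → ℂ := fun t ↦ expI (ψ t) * ((deriv h t : ℝ) : ℂ)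
  have hprod : ∀ t ∈ Ioo a b,
      HasDerivAt (fun t ↦ expI (ψ t) * (h t : ℂ)) (Complex.I * D t + E t) t := fun t ht ↦ by
    refine ((hasDerivAt_expI_comp (hψ t)).mul (hderiv t ht).ofReal_comp).congr_deriv ?_
    simp only [D, E, (hderiv t ht).deriv]
    push_cast
    ring
  have hD : IntervalIntegrable (fun t ↦ Complex.I * D t) volume a b :=
    (continuousOn_const.mul (hexpI.mul (Complex.continuous_ofReal.comp_continuousOn
      (hψ'.continuousOn.mul hh)))).intervalIntegrable_of_Icc hab
  have hE : IntervalIntegrable E volume a b := intervalIntegrable_expI_mul_deriv hab hψc hK'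
  have hEint : ‖∫ t in a..b, E t‖ ≤ K * (b - a) := norm_integral_expI_mul_deriv_le hab hK'
  have hFTC := intervalIntegral.integral_eq_sub_of_hasDerivAt_of_le hab
    (hexpI.mul (Complex.continuous_ofReal.comp_continuousOn hh)) hprod (hD.add hE)
  rw [intervalIntegral.integral_add hD hE, intervalIntegral.integral_const_mul] at hFTC
  calc ‖∫ t in a..b, D t‖ = ‖Complex.I * ∫ t in a..b, D t‖ := by
        rw [norm_mul, Complex.norm_I, one_mul]
    _ = ‖expI (ψ b) * (h b : ℂ) - expI (ψ a) * (h a : ℂ) - ∫ t in a..b, E t‖ := by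
        rw [eq_sub_of_add_eq hFTC]
        rfl
    _ ≤ ‖expI (ψ b) * (h b : ℂ)‖ + ‖expI (ψ a) * (h a : ℂ)‖ + ‖∫ t in a..b, E t‖ :=
        (norm_sub_le _ _).trans (add_le_add_left (norm_sub_le _ _) _)
    _ ≤ |h a| + |h b| + K * (b - a) := by
        simp only [norm_mul, norm_expI, one_mul, Complex.norm_real, Real.norm_eq_abs]
        linarith

end OscillatoryIntegral

/-- `r` has derivative `r'` and a zero of second order at `0`, quantified by the constant `c`: the
amplitudes for which a stationary point of the phase at `0` causes no loss. -/
structure HasDoubleZero (c : ℝ) (r r' : ℝ → ℝ) : Prop where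
  hasDerivAt : ∀ φ, HasDerivAt r (r' φ) φ
  abs_le : ∀ φ, 0 ≤ φ → |r φ| ≤ c * φ ^ 2
  abs_deriv_le : ∀ φ, 0 ≤ φ → |r' φ| ≤ c * φ

lemma le_two_mul_sin {φ : ℝ} (h0 : 0 ≤ φ) (hπ : φ ≤ π / 2) : φ ≤ 2 * sin φ := by
  have hhalf : 1 / 2 * φ ≤ 2 / π * φ := by
    gcongr ?_ * _
    rw [div_le_div_iff₀ two_pos pi_pos]
    linarith [pi_le_four]
  linarith [mul_le_sin h0 hπ]

lemma sin_pos_of_mem_Ioc {φ : ℝ} (hφ : φ ∈ Ioc 0 (π / 2)) : 0 < sin φ :=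
  sin_pos_of_pos_of_lt_pi hφ.1 (by linarith [hφ.2, pi_pos])

namespace HasDoubleZero

variable {c φ x : ℝ} {r r' : ℝ → ℝ}

lemma map_zero (hr : HasDoubleZero c r r') : r 0 = 0 := by
  simpa using hr.abs_le 0 le_rfl

lemma const_nonneg (hr : HasDoubleZero c r r') : 0 ≤ c := by
  simpa using (abs_nonneg _).trans (hr.abs_le 1 zero_le_one)

lemma abs_div_sin_le (hr : HasDoubleZero c r r') (hφ : φ ∈ Icc 0 (π / 2)) :
    |r φ / sin φ| ≤ 2 * c * φ := by
  rcases hφ.1.eq_or_lt with rfl | h0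
  · simp
  · have hsin := sin_pos_of_mem_Ioc ⟨h0, hφ.2⟩
    rw [abs_div, abs_of_pos hsin, div_le_iff₀ hsin]
    nlinarith [hr.abs_le φ hφ.1,
      mul_le_mul_of_nonneg_left (le_two_mul_sin hφ.1 hφ.2) (mul_nonneg hr.const_nonneg h0.le)]

lemma continuousOn_div_sin (hr : HasDoubleZero c r r') :
    ContinuousOn (fun φ ↦ r φ / sin φ) (Icc 0 (π / 2)) := by
  intro φ hφ
  rcases hφ.1.eq_or_lt with rfl | h0
  · have hbound : ContinuousWithinAt (fun φ ↦ 2 * c * φ) (Icc 0 (π / 2)) 0 := by fun_prop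
    rw [ContinuousWithinAt, mul_zero] at hbound
    rw [ContinuousWithinAt, sin_zero, div_zero]
    exact squeeze_zero_norm' (eventually_mem_nhdsWithin.mono fun y hy ↦ hr.abs_div_sin_le hy)
      hbound
  · exact ((hr.hasDerivAt φ).continuousAt.div continuous_sin.continuousAt
      (sin_pos_of_mem_Ioc ⟨h0, hφ.2⟩).ne').continuousWithinAt

lemma hasDerivAt_div_sin (hr : HasDoubleZero c r r') (hφ : φ ∈ Ioc 0 (π / 2)) :
    HasDerivAt (fun φ ↦ r φ / sin φ) (r' φ / sin φ - r φ * cos φ / sin φ ^ 2) φ := by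
  have hsin := sin_pos_of_mem_Ioc hφ
  exact ((hr.hasDerivAt φ).div (hasDerivAt_sin φ) hsin.ne').congr_deriv (by field_simp)

lemma abs_deriv_div_sin_le (hr : HasDoubleZero c r r') (hφ : φ ∈ Ioc 0 (π / 2)) :
    |r' φ / sin φ - r φ * cos φ / sin φ ^ 2| ≤ 6 * c := by
  have hsin := sin_pos_of_mem_Ioc hφ
  have hc := hr.const_nonneg
  have hφsin := le_two_mul_sin hφ.1.le hφ.2
  have hfirst : |r' φ / sin φ| ≤ 2 * c := by
    rw [abs_div, abs_of_pos hsin, div_le_iff₀ hsin]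
    nlinarith [hr.abs_deriv_le φ hφ.1.le]
  have hsecond : |r φ * cos φ / sin φ ^ 2| ≤ 4 * c := by
    rw [abs_div, abs_of_pos (pow_pos hsin 2), div_le_iff₀ (pow_pos hsin 2), abs_mul]
    calc |r φ| * |cos φ| ≤ |r φ| * 1 := by gcongr; exact abs_cos_le_one φ
      _ ≤ c * φ ^ 2 := by rw [mul_one]; exact hr.abs_le φ hφ.1.le
      _ ≤ c * (2 * sin φ) ^ 2 := by gcongr; exact hφ.1.le
      _ = 4 * c * sin φ ^ 2 := by ring
  linarith [abs_sub (r' φ / sin φ) (r φ * cos φ / sin φ ^ 2)]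

lemma norm_integral_expI_mul_le (hr : HasDoubleZero c r r') (hx : 0 < x) :
    ‖∫ φ in (0 : ℝ)..(π / 2), expI (-x * (1 - cos φ)) * (r φ : ℂ)‖ ≤ 16 * c / x := by
  have hphase : ∀ φ, HasDerivAt (fun φ ↦ -x * (1 - cos φ)) (-x * sin φ) φ := fun φ ↦ by
    simpa using ((hasDerivAt_cos φ).const_sub 1).const_mul (-x)
  have hmain := _root_.norm_integral_expI_mul_le (by positivity) hphase (by fun_prop)
    hr.continuousOn_div_sin (fun φ hφ ↦ hr.hasDerivAt_div_sin ⟨hφ.1, hφ.2.le⟩)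
    fun φ hφ ↦ hr.abs_deriv_div_sin_le ⟨hφ.1, hφ.2.le⟩
  have hintegrand : ∫ φ in (0 : ℝ)..(π / 2),
        expI (-x * (1 - cos φ)) * ((-x * sin φ * (r φ / sin φ) : ℝ) : ℂ) =
      -x * ∫ φ in (0 : ℝ)..(π / 2), expI (-x * (1 - cos φ)) * (r φ : ℂ) := by
    rw [← intervalIntegral.integral_const_mul]
    refine intervalIntegral.integral_congr fun φ hφ ↦ ?_
    rw [uIcc_of_le (by positivity)] at hφ
    have hcancel : -x * sin φ * (r φ / sin φ) = -x * r φ := by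
      rcases hφ.1.eq_or_lt with rfl | h0
      · simp [hr.map_zero]
      · have := (sin_pos_of_mem_Ioc ⟨h0, hφ.2⟩).ne'
        field_simp
    simp only [hcancel]
    push_cast
    ring
  have hend := hr.abs_div_sin_le ⟨(by positivity : 0 ≤ π / 2), le_rfl⟩
  have hπ := mul_le_mul_of_nonneg_left pi_le_four hr.const_nonneg
  rw [hintegrand, norm_mul, norm_neg, Complex.norm_real, Real.norm_of_nonneg hx.le] at hmain
  simp only [sin_zero, div_zero, abs_zero, sub_zero, zero_add] at hmain
  rw [le_div_iff₀ hx]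
  linarith

end HasDoubleZero

lemma hasDoubleZero_cos_sub_cos_half {ν : ℝ} (hν : 0 ≤ ν) :
    HasDoubleZero (ν ^ 2 + 1) (fun φ ↦ cos (ν * φ) - cos (1 / 2 * φ))
      fun φ ↦ -ν * sin (ν * φ) + 1 / 2 * sin (1 / 2 * φ) where
  hasDerivAt φ := by
    have hcos : ∀ k : ℝ, HasDerivAt (fun φ ↦ cos (k * φ)) (-sin (k * φ) * (k * 1)) φ := fun k ↦
      ((hasDerivAt_id φ).const_mul k).cos
    exact ((hcos ν).sub (hcos (1 / 2))).congr_deriv (by ring)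
  abs_le φ _ := by
    rw [abs_le]
    constructor <;>
      nlinarith [one_sub_sq_div_two_le_cos (x := ν * φ), one_sub_sq_div_two_le_cos (x := 1 / 2 * φ),
        cos_le_one (ν * φ), cos_le_one (1 / 2 * φ), sq_nonneg φ,
        mul_nonneg (sq_nonneg ν) (sq_nonneg φ)]
  abs_deriv_le φ hφ := by
    have hsin : ∀ k : ℝ, 0 ≤ k → |sin (k * φ)| ≤ k * φ := fun k hk ↦
      abs_sin_le_abs.trans_eq (abs_of_nonneg (mul_nonneg hk hφ))
    calc |-ν * sin (ν * φ) + 1 / 2 * sin (1 / 2 * φ)|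
        ≤ |-ν * sin (ν * φ)| + |1 / 2 * sin (1 / 2 * φ)| := abs_add_le _ _
      _ = ν * |sin (ν * φ)| + 1 / 2 * |sin (1 / 2 * φ)| := by
        rw [abs_mul, abs_neg, abs_of_nonneg hν, abs_mul, abs_of_pos (one_half_pos (α := ℝ))]
      _ ≤ ν * (ν * φ) + 1 / 2 * (1 / 2 * φ) := by gcongr <;> exact hsin _ (by positivity)
      _ ≤ (ν ^ 2 + 1) * φ := by nlinarith

section Asymptotics

open Filter Topology

/-- The integral `∫ exp (-i x (1 - cos φ)) cos (ν φ) dφ` over `[0, π / 2]`, obtained from the Anger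
integral by centring at the stationary point of the phase. -/
noncomputable def stationaryIntegral (ν x : ℝ) : ℂ :=
  ∫ φ in (0 : ℝ)..(π / 2), expI (-x * (1 - cos φ)) * ((cos (ν * φ) : ℝ) : ℂ)

lemma angerIntegral_eq_integral_cos_add_cos (ν x : ℝ) :
    angerIntegral ν x = ∫ φ in (0 : ℝ)..(π / 2),
      (cos (x * cos φ - ν * π / 2 + ν * φ) + cos (x * cos φ - ν * π / 2 - ν * φ)) := by
  have hshift : angerIntegral ν x =
      ∫ φ in (-(π / 2))..(π / 2), cos (x * cos φ - ν * π / 2 - ν * φ) := by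
    have := intervalIntegral.integral_comp_add_right (a := -(π / 2)) (b := π / 2)
      (fun θ ↦ cos (x * sin θ - ν * θ)) (π / 2)
    rw [neg_add_cancel, add_halves] at this
    rw [angerIntegral, ← this]
    refine intervalIntegral.integral_congr fun φ _ ↦ ?_
    simp only [sin_add_pi_div_two]
    ring_nf
  have hreflect : ∫ φ in (-(π / 2))..0, cos (x * cos φ - ν * π / 2 - ν * φ) =
      ∫ φ in (0 : ℝ)..(π / 2), cos (x * cos φ - ν * π / 2 + ν * φ) := by
    have := intervalIntegral.integral_comp_neg (a := 0) (b := π / 2)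
      (fun φ ↦ cos (x * cos φ - ν * π / 2 - ν * φ))
    rw [neg_zero] at this
    simp only [← this, cos_neg, mul_neg, sub_neg_eq_add]
  rw [hshift, ← intervalIntegral.integral_add_adjacent_intervals (b := 0), hreflect,
    ← intervalIntegral.integral_add]
  all_goals exact Continuous.intervalIntegrable (by fun_prop) _ _

lemma angerIntegral_eq_re_stationaryIntegral (ν x : ℝ) :
    angerIntegral ν x = 2 * (expI (x - ν * π / 2) * stationaryIntegral ν x).re := by
  have hcombine : expI (x - ν * π / 2) * stationaryIntegral ν x =
      ∫ φ in (0 : ℝ)..(π / 2), expI (x * cos φ - ν * π / 2) * ((cos (ν * φ) : ℝ) : ℂ) := by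
    rw [stationaryIntegral, ← intervalIntegral.integral_const_mul]
    refine intervalIntegral.integral_congr fun φ _ ↦ ?_
    simp only [← mul_assoc, ← expI_add]
    ring_nf
  have hre := Complex.reCLM.intervalIntegral_comp_comm (μ := volume) (a := 0) (b := π / 2)
    (f := fun φ ↦ expI (x * cos φ - ν * π / 2) * ((cos (ν * φ) : ℝ) : ℂ))
    (Continuous.intervalIntegrable (by fun_prop) _ _)
  simp only [Complex.reCLM_apply] at hre
  rw [hcombine, ← hre, angerIntegral_eq_integral_cos_add_cos,
    ← intervalIntegral.integral_const_mul]
  refine intervalIntegral.integral_congr fun φ _ ↦ ?_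
  simp only [Complex.re_mul_ofReal, expI_re, cos_add, cos_sub]
  ring

/-- The substitution `u = √(2 x) sin (φ / 2)` turns the order-`1 / 2` integral into a Fresnel
integral. -/
lemma sqrt_mul_stationaryIntegral_half {x : ℝ} (hx : 0 < x) :
    (√x : ℂ) * stationaryIntegral (1 / 2) x = (√2 : ℂ) * fresnel √x := by
  have hsqrt2 : √2 * √2 = 2 := mul_self_sqrt zero_le_two
  have harg : ∀ φ : ℝ, HasDerivAt (fun φ ↦ √x * √2 * sin (1 / 2 * φ))
      (√x * √2 * (cos (1 / 2 * φ) * (1 / 2 * 1))) φ := fun φ ↦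
    (((hasDerivAt_id φ).const_mul (1 / 2)).sin).const_mul _
  have hphase : ∀ φ : ℝ, -(√x * √2 * sin (1 / 2 * φ)) ^ 2 = -x * (1 - cos φ) := fun φ ↦ by
    have hcos : cos φ = 1 - 2 * sin (1 / 2 * φ) ^ 2 := by
      rw [sin_sq_eq_half_sub]
      ring_nf
    rw [hcos, mul_pow, mul_pow, sq_sqrt hx.le, sq_sqrt zero_le_two]
    ring
  have hderiv : ∀ φ : ℝ, HasDerivAt (fun φ ↦ fresnel (√x * √2 * sin (1 / 2 * φ)))
      ((√x * (√2 / 2) : ℝ) * (expI (-x * (1 - cos φ)) * ((cos (1 / 2 * φ) : ℝ) : ℂ))) φ :=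
    fun φ ↦ by
      refine ((hasDerivAt_fresnel _).scomp φ (harg φ)).congr_deriv ?_
      rw [hphase, Complex.real_smul]
      push_cast
      ring
  have hFTC := intervalIntegral.integral_eq_sub_of_hasDerivAt (a := 0) (b := π / 2)
    (fun φ _ ↦ hderiv φ) (Continuous.intervalIntegrable (by fun_prop) _ _)
  have hquarter : 1 / 2 * (π / 2) = π / 4 := by ring
  have hend : √x * √2 * (√2 / 2) = √x := by linear_combination √x / 2 * hsqrt2
  rw [intervalIntegral.integral_const_mul, mul_zero, sin_zero, mul_zero, fresnel_zero, sub_zero,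
    hquarter, sin_pi_div_four, hend, ← stationaryIntegral] at hFTC
  have hsqrt2C : (√2 : ℂ) * (√2 : ℂ) = 2 := mod_cast hsqrt2
  rw [← hFTC]
  push_cast
  linear_combination -(√x : ℂ) / 2 * stationaryIntegral (1 / 2) x * hsqrt2C

/-- Both amplitudes equal `1` at the stationary point, so their difference only contributes at the
lower order `1 / x`. -/
lemma norm_stationaryIntegral_sub_half_le {ν x : ℝ} (hν : 0 ≤ ν) (hx : 0 < x) :
    ‖stationaryIntegral ν x - stationaryIntegral (1 / 2) x‖ ≤ 16 * (ν ^ 2 + 1) / x := by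
  rw [stationaryIntegral, stationaryIntegral, ← intervalIntegral.integral_sub]
  · simpa only [Complex.ofReal_sub, mul_sub] using
      (hasDoubleZero_cos_sub_cos_half hν).norm_integral_expI_mul_le hx
  all_goals exact Continuous.intervalIntegrable (by fun_prop) _ _

lemma sqrt_mul_besselJ_sub_eq {ν x : ℝ} (hx : 0 < x) :
    √x * besselJ ν x - 2 * √2 / π * (expI (x - ν * π / 2) * fresnel √x).re =
      √x * (2 * (expI (x - ν * π / 2) *
        (stationaryIntegral ν x - stationaryIntegral (1 / 2) x)).re -
          sin (ν * π) * schlafliMoment ν 0 x) / π := by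
  have hsplit : (√x : ℂ) * (expI (x - ν * π / 2) * stationaryIntegral ν x) =
      (√2 : ℝ) * (expI (x - ν * π / 2) * fresnel √x) + (√x : ℝ) * (expI (x - ν * π / 2) *
        (stationaryIntegral ν x - stationaryIntegral (1 / 2) x)) := by
    linear_combination expI (x - ν * π / 2) * sqrt_mul_stationaryIntegral_half hx
  have hre := congrArg Complex.re hsplit
  rw [Complex.add_re, Complex.re_ofReal_mul, Complex.re_ofReal_mul, Complex.re_ofReal_mul] at hre
  rw [besselJ_eq_anger_sub_schlafli, angerIntegral_eq_re_stationaryIntegral]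
  linear_combination 2 / π * hre

lemma tendsto_sqrt_mul_besselJ_sub {ν : ℝ} (hν : 0 < ν) :
    Tendsto (fun x ↦ √x * besselJ ν x -
      2 * √2 / π * (expI (x - ν * π / 2) * fresnel √x).re) atTop (𝓝 0) := by
  have hdecay : Tendsto (fun x ↦ (2 * (16 * (ν ^ 2 + 1)) + 1) * (√x)⁻¹) atTop (𝓝 0) := by
    simpa using (tendsto_inv_atTop_zero.comp tendsto_sqrt_atTop).const_mul
      (2 * (16 * (ν ^ 2 + 1)) + 1)
  refine squeeze_zero_norm' ?_ hdecay
  filter_upwards [eventually_gt_atTop 0] with x hx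
  rw [sqrt_mul_besselJ_sub_eq hx, Real.norm_eq_abs, abs_div, abs_mul, abs_of_pos pi_pos,
    abs_of_nonneg (sqrt_nonneg x)]
  set R := (expI (x - ν * π / 2) * (stationaryIntegral ν x - stationaryIntegral (1 / 2) x)).re
  have hR : |R| ≤ 16 * (ν ^ 2 + 1) / x := by
    refine (Complex.abs_re_le_norm _).trans ?_
    rw [norm_mul, norm_expI, one_mul]
    exact norm_stationaryIntegral_sub_half_le hν.le hx
  have hmoment : |sin (ν * π) * schlafliMoment ν 0 x| ≤ 1 * (1 / x) := by
    rw [abs_mul, abs_of_nonneg (schlafliMoment_nonneg ν x 0)]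
    exact mul_le_mul (abs_sin_le_one _) (schlafliMoment_zero_le_one_div hν hx)
      (schlafliMoment_nonneg ν x 0) zero_le_one
  calc √x * |2 * R - sin (ν * π) * schlafliMoment ν 0 x| / π
      ≤ √x * |2 * R - sin (ν * π) * schlafliMoment ν 0 x| :=
        div_le_self (by positivity) (by linarith [pi_gt_three])
    _ ≤ √x * (2 * (16 * (ν ^ 2 + 1) / x) + 1 * (1 / x)) := by
        gcongr
        refine (abs_sub _ _).trans (add_le_add ?_ hmoment)
        rw [abs_mul, abs_two]
        gcongr
    _ = (2 * (16 * (ν ^ 2 + 1)) + 1) * (√x)⁻¹ := by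
        nth_rewrite 2 3 [← mul_self_sqrt hx.le]
        field_simp

lemma tendsto_re_expI_mul_fresnel_sq (ν : ℝ) :
    Tendsto (fun x ↦ (expI (x - ν * π / 2) * fresnel √x).re ^ 2 -
      π / 8 * (1 + sin (2 * x - ν * π))) atTop (𝓝 0) := by
  have hdecay : Tendsto (fun x ↦ 5 / √x) atTop (𝓝 0) :=
    tendsto_sqrt_atTop.const_div_atTop 5
  refine squeeze_zero_norm' ?_ hdecay
  filter_upwards [eventually_gt_atTop 0] with x hx
  have hphase : 2 * x - ν * π = 2 * (x - ν * π / 2) := by ring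
  rw [hphase]
  exact abs_re_expI_mul_fresnel_sq_sub_le (sqrt_pos.2 hx) _

lemma hasBesselAsymptotics_besselJ {ν : ℝ} (hν : 0 < ν) :
    HasBesselAsymptotics ν (besselJ ν) := by
  set p : ℝ → ℝ := fun x ↦ (expI (x - ν * π / 2) * fresnel √x).re
  set ε : ℝ → ℝ := fun x ↦ √x * besselJ ν x - 2 * √2 / π * p x
  have hε : Tendsto ε atTop (𝓝 0) := tendsto_sqrt_mul_besselJ_sub hν
  have hpbdd : IsBoundedUnder (· ≤ ·) atTop fun x ↦ ‖p x‖ :=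
    isBoundedUnder_of ⟨2, fun x ↦ (Complex.abs_re_le_norm _).trans <| by
      rw [norm_mul, norm_expI, one_mul]
      exact norm_fresnel_le _⟩
  have hcross : Tendsto (fun x ↦ ε x * p x) atTop (𝓝 0) := hε.zero_mul_isBoundedUnder_le hpbdd
  have hsq : Tendsto (fun x ↦ p x ^ 2 - π / 8 * (1 + sin (2 * x - ν * π))) atTop (𝓝 0) :=
    tendsto_re_expI_mul_fresnel_sq ν
  have hlim := ((hsq.const_mul (8 / π ^ 2)).add
    (hcross.const_mul (4 * √2 / π))).add (hε.mul hε)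
  simp only [mul_zero, add_zero] at hlim
  refine hlim.congr' ?_
  filter_upwards [eventually_ge_atTop 0] with x hx
  have hJ : x * besselJ ν x ^ 2 = (2 * √2 / π * p x + ε x) ^ 2 := by
    rw [add_sub_cancel, mul_pow, sq_sqrt hx]
  have hsqrt2 : √2 ^ 2 = 2 := sq_sqrt zero_le_two
  have hπ := pi_pos.ne'
  rw [hJ]
  clear_value p ε
  field_simp
  linear_combination -(4 * p x ^ 2) * hsqrt2

theorem exists_hasWKBPhase_besselJ {ν : ℝ} (hν : 1 / 2 ≤ ν) :
    ∃ X θ, HasWKBPhase ν (besselJ ν) X θ := by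
  have hν0 : 0 < ν := by linarith
  exact (isBesselSolution_besselJ hν0).exists_hasWKBPhase hν
    (fun _ hx ↦ abs_besselJ_le hν0 hx) (hasBesselAsymptotics_besselJ hν0)

end Asymptotics

/-! ### Counting the zeros of a single Bessel function -/

lemma lt_of_deriv_pos_of_eq {θ θ' : ℝ → ℝ} {c x y : ℝ} (hxy : x < y)
    (hθ : ∀ z, x ≤ z → HasDerivAt θ (θ' z) z) (hpos : ∀ z, x ≤ z → θ z = c → 0 < θ' z)
    (hc : c ≤ θ x) : c < θ y := by
  have hge : ∀ z ∈ Icc x y, c ≤ θ z := fun z hz ↦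
    image_le_of_deriv_right_lt_deriv_boundary' (f := fun _ ↦ c) (f' := fun _ ↦ 0)
      continuousOn_const (fun w _ ↦ hasDerivWithinAt_const w _ c) hc
      (fun w hw ↦ (hθ w hw.1).continuousAt.continuousWithinAt)
      (fun w hw ↦ (hθ w hw.1).hasDerivWithinAt)
      (fun w hw hwc ↦ hpos w hw.1 hwc.symm) hz
  refine (hge y ⟨hxy.le, le_rfl⟩).lt_of_ne fun hy ↦ ?_
  have hslope : ∀ᶠ z in nhdsWithin y (Iio y), 0 < slope θ y z :=
    ((hasDerivAt_iff_tendsto_slope.1 (hθ y hxy.le)).eventually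
      (lt_mem_nhds (hpos y hxy.le hy.symm))).filter_mono
        (nhdsWithin_mono y fun z hz ↦ ne_of_lt hz)
  obtain ⟨z, hz, hxz, hzy⟩ := (hslope.and (Ioo_mem_nhdsLT hxy)).exists
  rw [slope_def_field, ← hy] at hz
  exact hz.not_ge (div_nonpos_of_nonneg_of_nonpos (sub_nonneg.2 (hge z ⟨hxz.le, hzy.le⟩))
    (sub_nonpos.2 hzy.le))

lemma floor_div_pi_mul_pi_of_sin_eq_zero {t : ℝ} (ht : 0 ≤ t) (hsin : sin t = 0) :
    (⌊t / π⌋₊ : ℝ) * π = t := by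
  obtain ⟨m, rfl⟩ := sin_eq_zero_iff.1 hsin
  have hm : (0 : ℝ) ≤ m := nonneg_of_mul_nonneg_left ht pi_pos
  lift m to ℕ using mod_cast hm
  rw [mul_div_cancel_right₀ _ pi_pos.ne', Int.cast_natCast, Nat.floor_natCast]

namespace HasWKBPhase

variable {ν X μ : ℝ} {f θ : ℝ → ℝ}

lemma nat_mul_pi_lt_angle (h : HasWKBPhase ν f X θ) (hν : 0 < ν) (k : ℕ) {x y : ℝ} (hx : X ≤ x)
    (hxy : x < y) (hk : k * π ≤ θ x) : k * π < θ y := by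
  have hνz : ∀ z, x ≤ z → ν < z := fun z hz ↦ h.order_lt.trans_le (hx.trans hz)
  refine lt_of_deriv_pos_of_eq hxy (fun z hz ↦ h.isPruferAngle.hasDerivAt z (hνz z hz))
    (fun z hz hθz ↦ ?_) hk
  rw [hθz, sin_nat_mul_pi, zero_mul, mul_zero, add_zero]
  exact div_pos (localFreq_pos hν.le (hνz z hz)) (hν.trans (hνz z hz))

lemma eq_of_angle_eq_nat_mul_pi (h : HasWKBPhase ν f X θ) (hν : 0 < ν) {k : ℕ} {x y : ℝ}
    (hx : X ≤ x) (hy : X ≤ y) (hθx : θ x = k * π) (hθy : θ y = k * π) : x = y := by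
  by_contra hne
  rcases lt_or_gt_of_ne hne with hlt | hlt
  · exact (h.nat_mul_pi_lt_angle hν k hx hlt hθx.ge).ne' hθy
  · exact (h.nat_mul_pi_lt_angle hν k hy hlt hθy.ge).ne' hθx

lemma angle_pos (h : HasWKBPhase ν f X θ) (hν : 0 < ν) {x : ℝ} (hx : X < x) : 0 < θ x := by
  simpa using h.nat_mul_pi_lt_angle hν 0 le_rfl hx (by simpa using h.angle_mem.1.le)

lemma lt_of_eq_zero (h : HasWKBPhase ν f X θ) {x : ℝ} (hx : 0 < x) (hfx : f x = 0) : X < x :=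
  lt_of_not_ge fun hxX ↦ h.ne_zero x ⟨hx, hxX⟩ hfx

lemma angle_eq_floor_mul_pi (h : HasWKBPhase ν f X θ) (hν : 0 < ν) {x : ℝ} (hx : 0 < x)
    (hfx : f x = 0) : θ x = ⌊θ x / π⌋₊ * π := by
  have hXx := h.lt_of_eq_zero hx hfx
  exact (floor_div_pi_mul_pi_of_sin_eq_zero (h.angle_pos hν hXx).le
    ((h.isPruferAngle.eq_zero_iff x (h.order_lt.trans hXx)).1 hfx)).symm

lemma floor_angle_mem_Icc (h : HasWKBPhase ν f X θ) (hν : 0 < ν) {x : ℝ} (hx : 0 < x)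
    (hxμ : x ≤ μ) (hfx : f x = 0) : ⌊θ x / π⌋₊ ∈ Icc 1 ⌊θ μ / π⌋₊ := by
  have hXx := h.lt_of_eq_zero hx hfx
  have hθx := h.angle_eq_floor_mul_pi hν hx hfx
  have hpos : 0 < ⌊θ x / π⌋₊ := by
    rw [← Nat.cast_pos (α := ℝ), ← mul_pos_iff_of_pos_right pi_pos, ← hθx]
    exact h.angle_pos hν hXx
  refine ⟨hpos, (Nat.le_floor_iff' hpos.ne').2 ((le_div_iff₀ pi_pos).2 ?_)⟩
  rcases hxμ.eq_or_lt with rfl | hlt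
  · exact hθx.ge
  · exact (h.nat_mul_pi_lt_angle hν _ hXx.le hlt hθx.ge).le

lemma exists_angle_eq_nat_mul_pi (h : HasWKBPhase ν f X θ) (hμ : X ≤ μ) {k : ℕ}
    (hk : k ∈ Icc 1 ⌊θ μ / π⌋₊) : ∃ x ∈ Icc X μ, θ x = k * π := by
  have hcont : ContinuousOn θ (Icc X μ) := fun x hx ↦
    (h.isPruferAngle.hasDerivAt x (h.order_lt.trans_le hx.1)).continuousAt.continuousWithinAt
  refine intermediate_value_Icc hμ hcont ⟨h.angle_mem.2.le.trans ?_, ?_⟩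
  · exact le_mul_of_one_le_left pi_pos.le (mod_cast hk.1)
  · exact (le_div_iff₀ pi_pos).1 ((Nat.le_floor_iff' (Nat.one_le_iff_ne_zero.1 hk.1)).1 hk.2)

lemma bijOn_floor_angle (h : HasWKBPhase ν f X θ) (hν : 0 < ν) (hμ : X ≤ μ) :
    BijOn (fun x ↦ ⌊θ x / π⌋₊) {x | 0 < x ∧ x ≤ μ ∧ f x = 0} (Icc 1 ⌊θ μ / π⌋₊) := by
  refine ⟨fun x ⟨hx, hxμ, hfx⟩ ↦ h.floor_angle_mem_Icc hν hx hxμ hfx, ?_, fun k hk ↦ ?_⟩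
  · rintro x ⟨hx, -, hfx⟩ y ⟨hy, -, hfy⟩ hxy
    refine h.eq_of_angle_eq_nat_mul_pi hν (h.lt_of_eq_zero hx hfx).le (h.lt_of_eq_zero hy hfy).le
      (h.angle_eq_floor_mul_pi hν hx hfx) ?_
    rw [show ⌊θ x / π⌋₊ = ⌊θ y / π⌋₊ from hxy]
    exact h.angle_eq_floor_mul_pi hν hy hfy
  · obtain ⟨x, ⟨hXx, hxμ⟩, hθx⟩ := h.exists_angle_eq_nat_mul_pi hμ hk
    have hνx : ν < x := h.order_lt.trans_le hXx
    refine ⟨x, ⟨hν.trans hνx, hxμ, ?_⟩, ?_⟩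
    · rw [h.isPruferAngle.eq_zero_iff x hνx, hθx, sin_nat_mul_pi]
    · simp only [hθx, mul_div_cancel_right₀ _ pi_pos.ne', Nat.floor_natCast]

lemma ncard_zeros (h : HasWKBPhase ν f X θ) (hν : 0 < ν) (hμ : X ≤ μ) :
    {x | 0 < x ∧ x ≤ μ ∧ f x = 0}.ncard = ⌊θ μ / π⌋₊ := by
  have hbij := h.bijOn_floor_angle hν hμ
  rw [← hbij.injOn.ncard_image, hbij.image_eq, ← Finset.coe_Icc, ncard_coe_finset,
    Nat.card_Icc, Nat.add_sub_cancel]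

lemma ncard_zeros_of_le (h : HasWKBPhase ν f X θ) (hμ : μ ≤ X) :
    {x | 0 < x ∧ x ≤ μ ∧ f x = 0}.ncard = 0 := by
  suffices {x | 0 < x ∧ x ≤ μ ∧ f x = 0} = ∅ by rw [this, ncard_empty]
  exact eq_empty_of_forall_notMem fun x ⟨hx, hxμ, hfx⟩ ↦ h.ne_zero x ⟨hx, hxμ.trans hμ⟩ hfx

lemma exists_ncard_zeros_eq_floor (h : HasWKBPhase ν f X θ) (hν : 0 < ν) (hμ : ν < μ) :
    ∃ τ, {x | 0 < x ∧ x ≤ μ ∧ f x = 0}.ncard = ⌊τ / π⌋₊ ∧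
      |τ - (wkbPhase ν μ + π / 4)| ≤ min (3 / 4 * wkbError ν μ) (9 / 8) := by
  rcases le_or_gt μ X with hμX | hXμ
  · refine ⟨wkbPhase ν μ + π / 4, ?_, ?_⟩
    · rw [h.ncard_zeros_of_le hμX, eq_comm, Nat.floor_eq_zero, div_lt_one pi_pos]
      have hmono := monotoneOn_wkbPhase hν hμ.le h.order_lt.le hμX
      have hbound := wkbPhase_mul_wkbError_le_one hν h.order_lt
      rw [h.wkbError_eq] at hbound
      linarith [pi_gt_three]
    · have := wkbError_pos hν hμ
      rw [sub_self, abs_zero]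
      positivity
  · have hclose : |θ μ - (wkbPhase ν μ + π / 4)| ≤ 3 / 4 * wkbError ν μ := by
      rw [← sub_sub]
      exact h.abs_sub_le μ hμ
    have hanti := antitoneOn_wkbError hν h.order_lt hμ hXμ.le
    rw [h.wkbError_eq] at hanti
    exact ⟨θ μ, h.ncard_zeros hν hXμ.le, le_min hclose (hclose.trans (by linarith))⟩

end HasWKBPhase

lemma zcount_eq_zero_of_le {ν μ : ℝ} (hν : 1 / 2 ≤ ν) (hμ : μ ≤ ν) : zcount ν μ = 0 := by
  obtain ⟨X, θ, h⟩ := exists_hasWKBPhase_besselJ hν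
  exact h.ncard_zeros_of_le (hμ.trans h.order_lt.le)

lemma exists_zcount_eq_floor {ν μ : ℝ} (hν : 1 / 2 ≤ ν) (hμ : ν < μ) :
    ∃ τ, zcount ν μ = ⌊τ / π⌋₊ ∧
      |τ - (wkbPhase ν μ + π / 4)| ≤ min (3 / 4 * wkbError ν μ) (9 / 8) := by
  obtain ⟨X, θ, h⟩ := exists_hasWKBPhase_besselJ hν
  exact h.exists_ncard_zeros_eq_floor (by linarith) hμ

/-! ### Comparison with a column of lattice points -/

/-- The number of `k ≥ 1` with `k - 1 / 4 ≤ x g(ν / x)` if `ν ≤ x`, and `0` otherwise: the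
contribution of the order `ν` to the lattice count. -/
noncomputable def columnCount (ν x : ℝ) : ℕ :=
  if ν ≤ x then ⌊(wkbPhase ν x + π / 4) / π⌋₊ else 0

/-- The level `k π` is so close to the Liouville–Green phase that the phase error may put the Prüfer
angle of `J_ν` on its other side. -/
structure IsAmbiguousLevel (ν μ : ℝ) (k : ℕ) : Prop where
  order_lt : ν < μ
  one_le : 1 ≤ k
  abs_sub_le : |k * π - (wkbPhase ν μ + π / 4)| ≤ min (3 / 4 * wkbError ν μ) (9 / 8)

section ColumnCount

variable {ν μ x y : ℝ}

lemma columnCount_of_le (h : ν ≤ x) : columnCount ν x = ⌊(wkbPhase ν x + π / 4) / π⌋₊ :=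
  if_pos h

lemma le_columnCount_iff (hν : 0 < ν) {k : ℕ} (hk : 1 ≤ k) :
    k ≤ columnCount ν x ↔ ν ≤ x ∧ (k : ℝ) - 1 / 4 ≤ x * gfun (ν / x) := by
  by_cases h : ν ≤ x
  · have hphase : (wkbPhase ν x + π / 4) / π = x * gfun (ν / x) + 1 / 4 := by
      rw [mul_gfun_div (hν.trans_le h)]
      field_simp
    rw [columnCount_of_le h, Nat.le_floor_iff' (Nat.one_le_iff_ne_zero.1 hk), hphase,
      sub_le_iff_le_add, and_iff_right h]
  · rw [columnCount, if_neg h]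
    exact iff_of_false (by omega) fun h' ↦ h h'.1

lemma columnCount_le_columnCount_of_wkbPhase_le (hy : ν ≤ y) (hx : ν ≤ x)
    (h : wkbPhase ν y ≤ wkbPhase ν x) : columnCount ν y ≤ columnCount ν x := by
  rw [columnCount_of_le hy, columnCount_of_le hx]
  gcongr

lemma columnCount_mono (hν : 0 < ν) : Monotone (columnCount ν) := by
  intro x y hxy
  by_cases hx : ν ≤ x
  · have hy := hx.trans hxy
    exact columnCount_le_columnCount_of_wkbPhase_le hx hy (monotoneOn_wkbPhase hν hx hy hxy)
  · rw [columnCount, if_neg hx]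
    exact Nat.zero_le _

lemma columnCount_eq_zero_of_le (hν : 0 < ν) (hx : x ≤ ν) : columnCount ν x = 0 := by
  refine Nat.le_zero.1 ((columnCount_mono hν hx).trans_eq ?_)
  rw [columnCount_of_le le_rfl, wkbPhase_self hν, Nat.floor_eq_zero, div_lt_one pi_pos]
  linarith [pi_pos]

lemma abs_zcount_sub_columnCount_le {z : ℝ} (hν : 1 / 2 ≤ ν) (hμ : ν < μ) (hy : ν ≤ y) (hz : ν ≤ z)
    (hlower : wkbPhase ν y ≤ wkbPhase ν μ - 3 / 4 * wkbError ν μ)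
    (hupper : wkbPhase ν μ + 3 / 4 * wkbError ν μ ≤ wkbPhase ν z) :
    |(zcount ν μ : ℝ) - columnCount ν μ| ≤ columnCount ν z - columnCount ν y := by
  obtain ⟨τ, hcount, hτ⟩ := exists_zcount_eq_floor hν hμ
  obtain ⟨hτl, hτu⟩ := abs_le.1 (hτ.trans (min_le_left _ _))
  have hE := wkbError_pos (by linarith) hμ
  have hyμ := columnCount_le_columnCount_of_wkbPhase_le hy hμ.le (by linarith)
  have hμz := columnCount_le_columnCount_of_wkbPhase_le hμ.le hz (by linarith)
  have hyτ : columnCount ν y ≤ zcount ν μ := by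
    rw [hcount, columnCount_of_le hy]
    gcongr
    linarith
  have hτz : zcount ν μ ≤ columnCount ν z := by
    rw [hcount, columnCount_of_le hz]
    gcongr
    linarith
  rify at hyμ hμz hyτ hτz
  rw [abs_le]
  constructor <;> linarith

lemma abs_floor_sub_floor_le_one {s t : ℝ} (h : |t - s| < 1) :
    |(⌊t⌋₊ : ℝ) - ⌊s⌋₊| ≤ 1 := by
  have hfloor : ∀ {u v : ℝ}, u < v + 1 → ⌊u⌋₊ ≤ ⌊v⌋₊ + 1 := fun {u v} huv ↦
    Nat.lt_succ_iff.1 <| (Nat.floor_lt' (Nat.succ_ne_zero _)).2 <| by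
      push_cast
      linarith [Nat.lt_floor_add_one v]
  obtain ⟨hl, hu⟩ := abs_lt.1 h
  have hts := hfloor (show t < s + 1 by linarith)
  have hst := hfloor (show s < t + 1 by linarith)
  rify at hts hst
  rw [abs_le]
  constructor <;> linarith

lemma exists_nat_abs_sub_le_of_floor_ne {s t : ℝ} (h : ⌊t⌋₊ ≠ ⌊s⌋₊) :
    ∃ k : ℕ, 1 ≤ k ∧ |(k : ℝ) - s| ≤ |t - s| := by
  have hbetween : ∀ {u v : ℝ}, ⌊u⌋₊ < ⌊v⌋₊ → u < ⌊v⌋₊ ∧ (⌊v⌋₊ : ℝ) ≤ v := fun huv ↦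
    ⟨Nat.lt_of_floor_lt huv, (Nat.le_floor_iff' (Nat.ne_zero_of_lt huv)).1 le_rfl⟩
  rcases lt_or_gt_of_ne h with hlt | hlt
  · obtain ⟨hl, hu⟩ := hbetween hlt
    refine ⟨⌊s⌋₊, Nat.one_le_of_lt hlt, ?_⟩
    rw [abs_of_nonpos (by linarith), abs_of_nonpos (by linarith)]
    linarith
  · obtain ⟨hl, hu⟩ := hbetween hlt
    refine ⟨⌊t⌋₊, Nat.one_le_of_lt hlt, ?_⟩
    rw [abs_of_nonneg (by linarith), abs_of_nonneg (by linarith)]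
    linarith

lemma abs_zcount_sub_columnCount_le_one (hν : 1 / 2 ≤ ν) (hμ : ν < μ) :
    |(zcount ν μ : ℝ) - columnCount ν μ| ≤ 1 := by
  obtain ⟨τ, hcount, hτ⟩ := exists_zcount_eq_floor hν hμ
  rw [hcount, columnCount_of_le hμ.le]
  refine abs_floor_sub_floor_le_one ?_
  rw [← sub_div, abs_div, abs_of_pos pi_pos, div_lt_one pi_pos]
  linarith [hτ.trans (min_le_right _ _), pi_gt_three]

lemma exists_isAmbiguousLevel_of_zcount_ne (hν : 1 / 2 ≤ ν) (hμ : ν < μ)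
    (hne : zcount ν μ ≠ columnCount ν μ) : ∃ k, IsAmbiguousLevel ν μ k := by
  obtain ⟨τ, hcount, hτ⟩ := exists_zcount_eq_floor hν hμ
  rw [hcount, columnCount_of_le hμ.le] at hne
  obtain ⟨k, hk, hkτ⟩ := exists_nat_abs_sub_le_of_floor_ne hne
  have hscale : (k : ℝ) - (wkbPhase ν μ + π / 4) / π =
      (k * π - (wkbPhase ν μ + π / 4)) / π := by field_simp
  rw [hscale, ← sub_div, abs_div, abs_div, abs_of_pos pi_pos,
    div_le_div_iff_of_pos_right pi_pos] at hkτ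
  exact ⟨k, hμ, hk, hkτ.trans hτ⟩

end ColumnCount

/-! ### Orders below the transition region

From here on `a` stands for `μ ^ (1 / 7)`, which makes all exponents integral. -/

section BelowTransition

variable {ν a : ℝ}

lemma half_localFreq_div_le {x η : ℝ} (hν : 0 < ν) (hη : 0 < η) (hx : ν + 2 * η ≤ x) :
    localFreq ν x / x / 2 ≤ localFreq ν (x - η) / (x - η) := by
  have hx0 : 0 < x - η := by linarith
  have hfreq : localFreq ν x / 2 ≤ localFreq ν (x - η) := by
    refine le_of_sq_le_sq ?_ (localFreq_nonneg _ _)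
    rw [div_pow, localFreq_sq hν.le (by linarith), localFreq_sq hν.le (by linarith)]
    nlinarith [mul_nonneg (sub_nonneg.2 hx) (by linarith : 0 ≤ x + ν - η)]
  calc localFreq ν x / x / 2 = localFreq ν x / 2 / x := by ring
    _ ≤ localFreq ν (x - η) / x := by gcongr; linarith
    _ ≤ localFreq ν (x - η) / (x - η) := by
        gcongr
        · exact localFreq_nonneg _ _
        · linarith

lemma wkbError_le_of_le_sub (hν : 0 < ν) (ha : 1 ≤ a) (h : ν ≤ a ^ 7 - 2 * a ^ 5) :
    3 / 4 * wkbError ν (a ^ 7) ≤ 1 / a ^ 3 * (localFreq ν (a ^ 7) / a ^ 7 / 2) := by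
  have ha0 : 0 < a := by linarith
  have hνμ : ν < a ^ 7 := by linarith [pow_pos ha0 5]
  have hω := localFreq_pos hν.le hνμ
  have hsq : 2 * a ^ 12 ≤ localFreq ν (a ^ 7) ^ 2 := by
    calc 2 * a ^ 12 = 2 * a ^ 5 * a ^ 7 := by ring
      _ ≤ (a ^ 7 - ν) * (a ^ 7 + ν) := by gcongr <;> linarith
      _ = localFreq ν (a ^ 7) ^ 2 := by rw [localFreq_sq hν.le hνμ.le]; ring
  have hfourth : (2 * a ^ 12) ^ 2 ≤ (localFreq ν (a ^ 7) ^ 2) ^ 2 := by gcongr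
  have hright : 1 / a ^ 3 * (localFreq ν (a ^ 7) / a ^ 7 / 2) =
      localFreq ν (a ^ 7) / (2 * a ^ 10) := by field_simp
  rw [hright, wkbError, ← mul_div_assoc, div_le_div_iff₀ (by positivity) (by positivity)]
  nlinarith [pow_pos ha0 24]

lemma abs_zcount_sub_columnCount_le_of_le_sub (hν : 1 / 2 ≤ ν) (ha : 1 ≤ a)
    (h : ν ≤ a ^ 7 - 2 * a ^ 5) :
    |(zcount ν (a ^ 7) : ℝ) - columnCount ν (a ^ 7)| ≤
      columnCount ν (a ^ 7 + 1 / a ^ 3) - columnCount ν (a ^ 7 - 1 / a ^ 3) := by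
  have hν0 : 0 < ν := by linarith
  have hη : 0 < 1 / a ^ 3 := by positivity
  have hη1 : 1 / a ^ 3 ≤ 1 := (div_le_one (by positivity)).2 (one_le_pow₀ ha)
  have ha5 : 1 ≤ a ^ 5 := one_le_pow₀ ha
  have hE := wkbError_le_of_le_sub hν0 ha h
  have hhalf := mul_le_mul_of_nonneg_left
    (half_localFreq_div_le hν0 hη (show ν + 2 * (1 / a ^ 3) ≤ a ^ 7 by linarith)) hη.le
  have hbelow := wkbPhase_argument_gap hν0 (show ν < a ^ 7 - 1 / a ^ 3 by linarith)
    (show a ^ 7 - 1 / a ^ 3 ≤ a ^ 7 by linarith)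
  have habove := wkbPhase_argument_gap hν0 (show ν < a ^ 7 by linarith)
    (show a ^ 7 ≤ a ^ 7 + 1 / a ^ 3 by linarith)
  have hslope : 0 ≤ 1 / a ^ 3 * (localFreq ν (a ^ 7) / a ^ 7) :=
    mul_nonneg hη.le (div_nonneg (localFreq_nonneg _ _) (by positivity))
  rw [sub_sub_cancel] at hbelow
  rw [add_sub_cancel_left] at habove
  apply abs_zcount_sub_columnCount_le hν <;> linarith

end BelowTransition

/-! ### Ambiguous levels in the transition region -/

namespace IsAmbiguousLevel

variable {ν ν₁ ν₂ μ a : ℝ} {k : ℕ}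

lemma abs_sub_le_wkbError (h : IsAmbiguousLevel ν μ k) :
    |k * π - (wkbPhase ν μ + π / 4)| ≤ 3 / 4 * wkbError ν μ :=
  h.abs_sub_le.trans (min_le_left _ _)

lemma abs_sub_le_const (h : IsAmbiguousLevel ν μ k) :
    |k * π - (wkbPhase ν μ + π / 4)| ≤ 9 / 8 :=
  h.abs_sub_le.trans (min_le_right _ _)

lemma level_le (h : IsAmbiguousLevel ν (a ^ 7) k) (hν : 0 < ν) (ha : 1 ≤ a)
    (htrans : a ^ 7 - 2 * a ^ 5 < ν) : (k : ℝ) ≤ 4 * a ^ 4 := by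
  have hfreq : localFreq ν (a ^ 7) ≤ 2 * a ^ 6 := by
    refine le_of_sq_le_sq ?_ (by positivity)
    calc localFreq ν (a ^ 7) ^ 2 = (a ^ 7 - ν) * (a ^ 7 + ν) := by
          rw [localFreq_sq hν.le h.order_lt.le]
          ring
      _ ≤ 2 * a ^ 5 * (2 * a ^ 7) := by gcongr <;> linarith [h.order_lt]
      _ = (2 * a ^ 6) ^ 2 := by ring
  have hphase : wkbPhase ν (a ^ 7) ≤ 8 * a ^ 4 := by
    refine (wkbPhase_le hν h.order_lt.le).trans ((div_le_iff₀ (by positivity)).2 ?_)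
    calc localFreq ν (a ^ 7) ^ 3 ≤ (2 * a ^ 6) ^ 3 := by
          gcongr
          exact localFreq_nonneg _ _
      _ = 8 * a ^ 4 * (a ^ 7) ^ 2 := by ring
  have hkπ : 3 * (k : ℝ) ≤ k * π := by nlinarith [pi_gt_three, (Nat.cast_nonneg k : (0 : ℝ) ≤ k)]
  linarith [(abs_le.1 h.abs_sub_le_const).2, pi_le_four, one_le_pow₀ ha (n := 4)]

lemma level_mul_sq_le (h : IsAmbiguousLevel ν μ k) (hν : 0 < ν) :
    k * μ ^ 2 ≤ localFreq ν μ ^ 3 := by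
  have hμ : 0 < μ := hν.trans h.order_lt
  have hk : (1 : ℝ) ≤ k := mod_cast h.one_le
  rw [← le_div_iff₀ (by positivity)]
  refine le_trans ?_ (wkbPhase_le hν h.order_lt.le)
  nlinarith [(abs_le.1 h.abs_sub_le_const).2, pi_gt_d2, pi_lt_d2]

lemma pow_four_le_localFreq (h : IsAmbiguousLevel ν (a ^ 7) k) (hν : 0 < ν) (ha : 1 ≤ a) :
    a ^ 4 ≤ localFreq ν (a ^ 7) := by
  have hk : (1 : ℝ) ≤ k := mod_cast h.one_le
  refine le_of_pow_le_pow_left₀ three_ne_zero (localFreq_nonneg _ _) ?_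
  calc (a ^ 4) ^ 3 = a ^ 12 := by ring
    _ ≤ a ^ 14 := pow_le_pow_right₀ ha (by norm_num)
    _ = 1 * (a ^ 7) ^ 2 := by ring
    _ ≤ k * (a ^ 7) ^ 2 := by gcongr
    _ ≤ localFreq ν (a ^ 7) ^ 3 := h.level_mul_sq_le hν

lemma order_sub_mul_localFreq_pow_le (h₁ : IsAmbiguousLevel ν₁ μ k) (h₂ : IsAmbiguousLevel ν₂ μ k)
    (hν₁ : 0 < ν₁) (h12 : ν₁ ≤ ν₂) : (ν₂ - ν₁) * localFreq ν₂ μ ^ 4 ≤ 3 / 2 * μ ^ 3 := by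
  have hν₂ : 0 < ν₂ := hν₁.trans_le h12
  have hμ : 0 < μ := hν₁.trans h₁.order_lt
  have hω := localFreq_pos hν₂.le h₂.order_lt
  have hfreq : localFreq ν₂ μ ≤ localFreq ν₁ μ := by
    unfold localFreq
    gcongr
  have hError : wkbError ν₁ μ ≤ wkbError ν₂ μ := by
    unfold wkbError
    gcongr
  have hgap : (ν₂ - ν₁) * (localFreq ν₂ μ / μ) ≤ 3 / 2 * wkbError ν₂ μ := by
    linarith [wkbPhase_order_gap hν₁ h12 h₂.order_lt, (abs_le.1 h₁.abs_sub_le_wkbError).1,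
      (abs_le.1 h₂.abs_sub_le_wkbError).2]
  calc (ν₂ - ν₁) * localFreq ν₂ μ ^ 4
      = (ν₂ - ν₁) * (localFreq ν₂ μ / μ) * (localFreq ν₂ μ ^ 3 * μ) := by field_simp
    _ ≤ 3 / 2 * wkbError ν₂ μ * (localFreq ν₂ μ ^ 3 * μ) := by gcongr
    _ = 3 / 2 * μ ^ 3 := by
        unfold wkbError
        field_simp

lemma order_sub_le (h₁ : IsAmbiguousLevel ν₁ (a ^ 7) k) (h₂ : IsAmbiguousLevel ν₂ (a ^ 7) k)
    (hν₁ : 0 < ν₁) (h12 : ν₁ ≤ ν₂) (ha : 1 ≤ a) : ν₂ - ν₁ ≤ 3 / 2 * a ^ 3 * (1 / k) := by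
  have hν₂ : 0 < ν₂ := hν₁.trans_le h12
  have hk : (0 : ℝ) < k := mod_cast h₁.one_le
  rw [mul_one_div, le_div_iff₀ hk]
  refine le_of_mul_le_mul_right ?_ (by positivity : 0 < a ^ 18)
  calc (ν₂ - ν₁) * k * a ^ 18 = (ν₂ - ν₁) * (k * (a ^ 7) ^ 2 * a ^ 4) := by ring
    _ ≤ (ν₂ - ν₁) * (localFreq ν₂ (a ^ 7) ^ 3 * localFreq ν₂ (a ^ 7)) := by
        gcongr
        · exact pow_nonneg (localFreq_nonneg _ _) 3
        · exact h₂.level_mul_sq_le hν₂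
        · exact h₂.pow_four_le_localFreq hν₂ ha
    _ = (ν₂ - ν₁) * localFreq ν₂ (a ^ 7) ^ 4 := by ring
    _ ≤ 3 / 2 * (a ^ 7) ^ 3 := h₁.order_sub_mul_localFreq_pow_le h₂ hν₁ h12
    _ = 3 / 2 * a ^ 3 * a ^ 18 := by ring

end IsAmbiguousLevel

lemma card_le_add_one_of_sub_le {s : Finset ℕ} {L : ℝ} (hL : 0 ≤ L)
    (h : ∀ x ∈ s, ∀ y ∈ s, x ≤ y → (y : ℝ) - x ≤ L) : (s.card : ℝ) ≤ L + 1 := by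
  rcases s.eq_empty_or_nonempty with rfl | hs
  · rw [Finset.card_empty, Nat.cast_zero]
    linarith
  · have hcard : s.card ≤ s.max' hs + 1 - s.min' hs :=
      (Finset.card_le_card fun x hx ↦ Finset.mem_Icc.2 ⟨s.min'_le x hx, s.le_max' x hx⟩).trans_eq
        (Nat.card_Icc _ _)
    have hle : s.min' hs ≤ s.max' hs := s.min'_le_max' hs
    have hspread := h _ (s.min'_mem hs) _ (s.max'_mem hs) hle
    have hadd : s.card + s.min' hs ≤ s.max' hs + 1 := by omega
    rify at hadd
    linarith

lemma sum_one_div_le {a : ℝ} (ha : 1 ≤ a) :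
    ∑ k ∈ Finset.Icc 1 ⌊4 * a ^ 4⌋₊, 1 / (k : ℝ) ≤ 6 * a := by
  have hharmonic : ∑ k ∈ Finset.Icc 1 ⌊4 * a ^ 4⌋₊, 1 / (k : ℝ) = harmonic ⌊4 * a ^ 4⌋₊ := by
    simp [harmonic_eq_sum_Icc]
  have hfloor : 1 ≤ ⌊4 * a ^ 4⌋₊ := Nat.le_floor (by
    rw [Nat.cast_one]
    linarith [one_le_pow₀ ha (n := 4)])
  have hlog : log (4 * a ^ 4) = log 4 + 4 * log a := by
    rw [log_mul (by norm_num) (by positivity), log_pow]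
    norm_cast
  calc ∑ k ∈ Finset.Icc 1 ⌊4 * a ^ 4⌋₊, 1 / (k : ℝ)
      ≤ 1 + log ⌊4 * a ^ 4⌋₊ := hharmonic.trans_le (harmonic_le_one_add_log _)
    _ ≤ 1 + log (4 * a ^ 4) := by
        have hpos : (0 : ℝ) < ⌊4 * a ^ 4⌋₊ := mod_cast hfloor
        linarith [log_le_log hpos (Nat.floor_le (by positivity))]
    _ ≤ 6 * a := by
        linarith [log_le_sub_one_of_pos (by linarith : 0 < a),
          log_le_sub_one_of_pos (by norm_num : (0 : ℝ) < 4)]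

/-! ### Summation over the orders -/

/-- The order `n + d / 2 - 1` of the Bessel function attached to the index `n` in dimension `d`. -/
noncomputable def besselOrder (d n : ℕ) : ℝ := (n : ℝ) + (d : ℝ) / 2 - 1

open Classical in
/-- The indices in `[l, M)` whose order lies in the transition region below `a ^ 7` and admits an
ambiguous level. -/
noncomputable def ambiguousIndices (d l M : ℕ) (a : ℝ) : Finset ℕ :=
  {n ∈ Finset.Ico l M | a ^ 7 - 2 * a ^ 5 < besselOrder d n ∧
    ∃ k, IsAmbiguousLevel (besselOrder d n) (a ^ 7) k}

section Summation

variable {d : ℕ}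

lemma half_add_le_besselOrder (hd : 3 ≤ d) (n : ℕ) : (n : ℝ) + 1 / 2 ≤ besselOrder d n := by
  have : (3 : ℝ) ≤ d := mod_cast hd
  unfold besselOrder
  linarith

lemma half_le_besselOrder (hd : 3 ≤ d) (n : ℕ) : 1 / 2 ≤ besselOrder d n := by
  linarith [half_add_le_besselOrder hd n, (Nat.cast_nonneg n : (0 : ℝ) ≤ n)]

lemma besselOrder_pos (hd : 3 ≤ d) (n : ℕ) : 0 < besselOrder d n := by
  linarith [half_le_besselOrder hd n]

open Classical in
lemma card_filter_isAmbiguousLevel_le (hd : 3 ≤ d) (s : Finset ℕ) {a : ℝ} (ha : 1 ≤ a) (k : ℕ) :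
    (Finset.card {n ∈ s | IsAmbiguousLevel (besselOrder d n) (a ^ 7) k} : ℝ) ≤
      3 / 2 * a ^ 3 * (1 / k) + 1 := by
  refine card_le_add_one_of_sub_le (by positivity) fun x hx y hy hxy ↦ ?_
  have hxy' : (x : ℝ) ≤ y := mod_cast hxy
  have hgap := (Finset.mem_filter.1 hx).2.order_sub_le (Finset.mem_filter.1 hy).2
    (besselOrder_pos hd x) (by unfold besselOrder; gcongr) ha
  unfold besselOrder at hgap
  linarith

open Classical in
lemma card_ambiguousIndices_le (hd : 3 ≤ d) (l M : ℕ) {a : ℝ} (ha : 1 ≤ a) :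
    ((ambiguousIndices d l M a).card : ℝ) ≤ 13 * a ^ 4 := by
  set K := ⌊4 * a ^ 4⌋₊
  have hcover : ambiguousIndices d l M a ⊆ (Finset.Icc 1 K).biUnion fun k ↦
      {n ∈ Finset.Ico l M | IsAmbiguousLevel (besselOrder d n) (a ^ 7) k} := by
    intro n hn
    obtain ⟨hnM, htrans, k, hk⟩ := Finset.mem_filter.1 hn
    exact Finset.mem_biUnion.2 ⟨k, Finset.mem_Icc.2 ⟨hk.one_le,
      Nat.le_floor (hk.level_le (besselOrder_pos hd n) ha htrans)⟩,
      Finset.mem_filter.2 ⟨hnM, hk⟩⟩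
  have hK : (K : ℝ) ≤ 4 * a ^ 4 := Nat.floor_le (by positivity)
  calc ((ambiguousIndices d l M a).card : ℝ)
      ≤ ∑ k ∈ Finset.Icc 1 K, (Finset.card
          {n ∈ Finset.Ico l M | IsAmbiguousLevel (besselOrder d n) (a ^ 7) k} : ℝ) :=
        mod_cast (Finset.card_le_card hcover).trans Finset.card_biUnion_le
    _ ≤ ∑ k ∈ Finset.Icc 1 K, (3 / 2 * a ^ 3 * (1 / (k : ℝ)) + 1) :=
        Finset.sum_le_sum fun k _ ↦ card_filter_isAmbiguousLevel_le hd _ ha k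
    _ = 3 / 2 * a ^ 3 * ∑ k ∈ Finset.Icc 1 K, 1 / (k : ℝ) + K := by
        rw [Finset.sum_add_distrib, ← Finset.mul_sum]
        simp
    _ ≤ 3 / 2 * a ^ 3 * (6 * a) + 4 * a ^ 4 := by
        gcongr
        exact sum_one_div_le ha
    _ = 13 * a ^ 4 := by ring

lemma lattice_points_eq_image (hd : 3 ≤ d) (l M : ℕ) {x : ℝ} (hM : x ≤ M) :
    {p : ℤ × ℤ | (l : ℤ) ≤ p.1 ∧ 1 ≤ p.2 ∧ (p.1 : ℝ) + (d : ℝ) / 2 - 1 ≤ x ∧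
      (p.2 : ℝ) - 1 / 4 ≤ x * gfun (((p.1 : ℝ) + (d : ℝ) / 2 - 1) / x)} =
    (fun q : (_ : ℕ) × ℕ ↦ ((q.1 : ℤ), (q.2 : ℤ))) ''
      ((Finset.Ico l M).sigma fun n ↦ Finset.Icc 1 (columnCount (besselOrder d n) x)) := by
  ext ⟨n, k⟩
  simp only [mem_ofPred_eq, mem_image, Finset.mem_coe, Finset.mem_sigma, Finset.mem_Ico,
    Finset.mem_Icc, Prod.mk.injEq, Sigma.exists]
  constructor
  · rintro ⟨hln, hk, hnx, hkx⟩
    lift n to ℕ using by omega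
    lift k to ℕ using by omega
    simp only [Int.cast_natCast] at hnx hkx
    have hnM : (n : ℝ) < M := by
      linarith [half_add_le_besselOrder hd n, show besselOrder d n ≤ x from hnx]
    exact ⟨n, k, ⟨⟨by omega, mod_cast hnM⟩, by omega,
      (le_columnCount_iff (besselOrder_pos hd n) (by omega)).2 ⟨hnx, hkx⟩⟩, rfl, rfl⟩
  · rintro ⟨n, k, ⟨⟨hln, -⟩, hk, hkx⟩, rfl, rfl⟩
    exact ⟨by omega, by omega, (le_columnCount_iff (besselOrder_pos hd n) hk).1 hkx⟩

lemma latticeW_eq_sum_columnCount (hd : 3 ≤ d) (l M : ℕ) {x : ℝ} (hM : x ≤ M) :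
    latticeW d l x = ∑ n ∈ Finset.Ico l M, columnCount (besselOrder d n) x := by
  have hinj : Function.Injective fun q : (_ : ℕ) × ℕ ↦ ((q.1 : ℤ), (q.2 : ℤ)) := by
    rintro ⟨n, k⟩ ⟨n', k'⟩ h
    simpa using h
  rw [latticeW, lattice_points_eq_image hd l M hM, hinj.injOn.ncard_image, ncard_coe_finset,
    Finset.card_sigma]
  simp

lemma tsum_zcount_eq_sum (hd : 3 ≤ d) (l M : ℕ) {x : ℝ} (hM : x ≤ M) :
    ∑' n : ℕ, (if l ≤ n then (zcount (besselOrder d n) x : ℝ) else 0) =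
      ∑ n ∈ Finset.Ico l M, (zcount (besselOrder d n) x : ℝ) := by
  rw [tsum_eq_sum (s := Finset.Ico l M)]
  · exact Finset.sum_congr rfl fun n hn ↦ if_pos (Finset.mem_Ico.1 hn).1
  · intro n hn
    split_ifs with hln
    · have hMn : (M : ℝ) ≤ n := by
        rw [Finset.mem_Ico, not_and, not_lt] at hn
        exact mod_cast hn hln
      have hxn : x ≤ besselOrder d n := by linarith [half_add_le_besselOrder hd n]
      rw [zcount_eq_zero_of_le (half_le_besselOrder hd n) hxn, Nat.cast_zero]
    · rfl

open Classical in
lemma abs_zcount_sub_columnCount_le_add_ite (hd : 3 ≤ d) {l M n : ℕ} {a : ℝ} (ha : 1 ≤ a)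
    (hn : n ∈ Finset.Ico l M) :
    |(zcount (besselOrder d n) (a ^ 7) : ℝ) - columnCount (besselOrder d n) (a ^ 7)| ≤
      (columnCount (besselOrder d n) (a ^ 7 + 1 / a ^ 3) : ℝ) -
        columnCount (besselOrder d n) (a ^ 7 - 1 / a ^ 3) +
          if n ∈ ambiguousIndices d l M a then 1 else 0 := by
  have hν := half_le_besselOrder hd n
  have hη : 0 < 1 / a ^ 3 := by positivity
  have hmono := columnCount_mono (besselOrder_pos hd n)
    (show a ^ 7 - 1 / a ^ 3 ≤ a ^ 7 + 1 / a ^ 3 by linarith)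
  rify at hmono
  have hite : (0 : ℝ) ≤ if n ∈ ambiguousIndices d l M a then 1 else 0 := by split_ifs <;> simp
  rcases le_or_gt (besselOrder d n) (a ^ 7 - 2 * a ^ 5) with hbelow | htrans
  · linarith [abs_zcount_sub_columnCount_le_of_le_sub hν ha hbelow]
  by_cases heq : zcount (besselOrder d n) (a ^ 7) = columnCount (besselOrder d n) (a ^ 7)
  · rw [heq, sub_self, abs_zero]
    linarith
  have hνμ : besselOrder d n < a ^ 7 := lt_of_not_ge fun hge ↦ heq <| by
    rw [zcount_eq_zero_of_le hν hge, columnCount_eq_zero_of_le (besselOrder_pos hd n) hge]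
  have hmem : n ∈ ambiguousIndices d l M a :=
    Finset.mem_filter.2 ⟨hn, htrans, exists_isAmbiguousLevel_of_zcount_ne hν hνμ heq⟩
  rw [if_pos hmem]
  linarith [abs_zcount_sub_columnCount_le_one hν hνμ]

theorem abs_tsum_zcount_sub_latticeW_le (hd : 3 ≤ d) (l : ℕ) {a : ℝ} (ha : 1 ≤ a) :
    |∑' n : ℕ, (if l ≤ n then (zcount (besselOrder d n) (a ^ 7) : ℝ) else 0) -
        (latticeW d l (a ^ 7) : ℝ)| ≤
      (latticeW d l (a ^ 7 + 1 / a ^ 3) : ℝ) - (latticeW d l (a ^ 7 - 1 / a ^ 3) : ℝ) +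
        13 * a ^ 4 := by
  classical
  have hη : 0 < 1 / a ^ 3 := by positivity
  obtain ⟨M, hM⟩ := exists_nat_ge (a ^ 7 + 1 / a ^ 3)
  have hcard : ∑ n ∈ Finset.Ico l M, (if n ∈ ambiguousIndices d l M a then (1 : ℝ) else 0) ≤
      13 * a ^ 4 := by
    have hsub : ambiguousIndices d l M a ⊆ Finset.Ico l M := Finset.filter_subset _ _
    rw [Finset.sum_boole, Finset.filter_mem_eq_inter, Finset.inter_eq_right.2 hsub]
    exact card_ambiguousIndices_le hd l M ha
  rw [tsum_zcount_eq_sum hd l M (by linarith),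
    latticeW_eq_sum_columnCount hd l M (show a ^ 7 ≤ M by linarith),
    latticeW_eq_sum_columnCount hd l M hM,
    latticeW_eq_sum_columnCount hd l M (show a ^ 7 - 1 / a ^ 3 ≤ M by linarith)]
  push_cast
  rw [← Finset.sum_sub_distrib, ← Finset.sum_sub_distrib]
  refine (Finset.abs_sum_le_sum_abs _ _).trans ((Finset.sum_le_sum fun n hn ↦
    abs_zcount_sub_columnCount_le_add_ite hd ha hn).trans ?_)
  rw [Finset.sum_add_distrib]
  linarith

end Summation

/-- comparison of the zero count `𝒩_l(μ)` with the lattice count `𝒲_l(μ)`. -/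
theorem zero_count_vs_lattice_count (d : ℕ) (hd : 3 ≤ d) :
    ∃ C C' : ℝ, 0 < C ∧ 0 < C' ∧ ∀ l : ℕ, ∀ μ : ℝ, 2 ≤ μ →
      |(∑' n : ℕ, if l ≤ n then (zcount ((n : ℝ) + (d : ℝ) / 2 - 1) μ : ℝ) else 0) -
          (latticeW d l μ : ℝ)| ≤
        (latticeW d l (μ + C * μ ^ (-(3 : ℝ) / 7)) : ℝ) -
          (latticeW d l (μ - C * μ ^ (-(3 : ℝ) / 7)) : ℝ) + C' * μ ^ ((4 : ℝ) / 7) := by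
  refine ⟨1, 13, one_pos, by norm_num, fun l μ hμ ↦ ?_⟩
  have hμ0 : 0 ≤ μ := by linarith
  set a := μ ^ ((1 : ℝ) / 7) with ha
  have ha1 : 1 ≤ a := one_le_rpow (by linarith) (by norm_num)
  have hpow7 : a ^ 7 = μ := by
    rw [ha, ← rpow_natCast, ← rpow_mul hμ0]
    norm_num
  have hpow4 : μ ^ ((4 : ℝ) / 7) = a ^ 4 := by
    rw [ha, ← rpow_natCast, ← rpow_mul hμ0]
    norm_num
  have hpow3 : μ ^ (-(3 : ℝ) / 7) = 1 / a ^ 3 := by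
    rw [ha, ← rpow_natCast, ← rpow_mul hμ0, one_div, ← rpow_neg hμ0]
    norm_num
  have hmain := abs_tsum_zcount_sub_latticeW_le hd l ha1
  rw [hpow7] at hmain
  rw [hpow3, hpow4, one_mul]
  exact hmain
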